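/- arXiv:2003.12926 — 4 statements merged into one kernel-verified Lean document; each statement's English description precedes it below -/
import Mathlib

section
/- For every integer k and every real number t with |t| < 1, the series identity ∑_{m=0}^∞ (arsinh t)^{2m} / ((2m)! (2m+1)^k) = ∑_{n=0}^∞ 𝔠^{(k)}_{2n} · t^{2n}/(2n)! holds, where 𝔠^{(k)}_{2n} = ∑_{m=0}^{n} (-4)^{n-m} T(n,m)/(2m+1)^k. In other words, the poly-Cauchy numbers with level 2 defined by the generating function Lif_{2,k}(arsinh t) are given explicitly by 𝔠^{(k)}_{2n} = ∑_{m=1}^{n} (-4)^{n-m} T(n,m)/(2m+1)^k for n ≥ 1. -/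
/-- Stirling numbers of the first kind with level 2:
`T2 0 0 = 1`, `T2 n m = 0` for `m > n` or (`n ≥ 1` and `m = 0`),
and `T2 n m = T2 (n-1) (m-1) + (n-1)^2 * T2 (n-1) m`. -/
def T2 : ℕ → ℕ → ℕ
  | 0, 0 => 1
  | 0, _ + 1 => 0
  | _ + 1, 0 => 0
  | n + 1, m + 1 => T2 n m + n ^ 2 * T2 n (m + 1)

/-- Poly-Cauchy numbers with level 2: `polyCauchy2 k n = 𝔠^{(k)}_{2n}`. -/
def polyCauchy2 (k : ℤ) (n : ℕ) : ℚ :=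
  ∑ m ∈ Finset.range (n + 1), (-4 : ℚ) ^ (n - m) * (T2 n m : ℚ) / (2 * (m : ℚ) + 1) ^ k

lemma T2_zero_of_lt : ∀ (n m : ℕ), n < m → T2 n m = 0
  | 0, 0, h => by omega
  | 0, _ + 1, _ => by simp [T2]
  | _ + 1, 0, h => by omega
  | n + 1, m + 1, h => by
    rw [T2, T2_zero_of_lt n m (by omega), T2_zero_of_lt n (m+1) (by omega)]; simp

noncomputable def aC (n m : ℕ) : ℝ := (-4 : ℝ) ^ (n - m) * (T2 n m : ℝ)

lemma aC_rec (n m : ℕ) : aC (n+1) (m+1) = aC n m - 4 * (n:ℝ)^2 * aC n (m+1) := by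
  unfold aC
  rw [T2]
  rcases Nat.lt_or_ge n (m+1) with h | h
  · rw [T2_zero_of_lt n (m+1) h]; simp
  · obtain ⟨d, rfl⟩ := Nat.exists_eq_add_of_le h
    have h1 : m + 1 + d + 1 - (m + 1) = d + 1 := by omega
    have h2 : m + 1 + d - m = d + 1 := by omega
    have h3 : m + 1 + d - (m+1) = d := by omega
    rw [h1, h2, h3]; push_cast; ring

lemma sum_T2 (n : ℕ) : ∑ m ∈ Finset.range (n+2), (T2 (n+1) m : ℝ)
    = (1 + (n:ℝ)^2) * ∑ m ∈ Finset.range (n+1), (T2 n m : ℝ) := by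
  rw [Finset.sum_range_succ']
  have h0 : (T2 (n+1) 0 : ℝ) = 0 := by simp [T2]
  rw [h0, add_zero]
  have : ∀ m, (T2 (n+1) (m+1) : ℝ) = T2 n m + (n:ℝ)^2 * T2 n (m+1) := by
    intro m; rw [T2]; push_cast; ring
  simp_rw [this]
  rw [Finset.sum_add_distrib, ← Finset.mul_sum]
  have h2 : (n:ℝ)^2 * ∑ m ∈ Finset.range (n+1), (T2 n (m+1) : ℝ)
      = (n:ℝ)^2 * ∑ m ∈ Finset.range (n+1), (T2 n m : ℝ) := by
    rcases n with _ | n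
    · simp
    · congr 1
      have e1 := Finset.sum_range_succ' (fun m => (T2 (n+1) m : ℝ)) (n+1+1)
      have e2 := Finset.sum_range_succ (fun m => (T2 (n+1) m : ℝ)) (n+1+1)
      rw [T2_zero_of_lt (n+1) (n+1+1) (by omega)] at e2
      have h0 : (T2 (n+1) 0 : ℝ) = 0 := by simp [T2]
      rw [h0] at e1
      simp only [Nat.cast_zero] at e1 e2
      linarith
  rw [h2]; ring

lemma sum_T2_le (n : ℕ) :
    (4:ℝ)^n * ∑ m ∈ Finset.range (n+1), (T2 n m : ℝ) ≤ 2 * (Nat.factorial (2*n) : ℝ) := by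
  have key : ∀ n : ℕ, (4:ℝ)^(n+1) * ∑ m ∈ Finset.range (n+2), (T2 (n+1) m : ℝ)
      ≤ 2 * (Nat.factorial (2*(n+1)) : ℝ) := by
    intro n
    induction n with
    | zero => 
      rw [sum_T2]; simp [T2, Nat.factorial]; norm_num
    | succ n ih =>
      rw [sum_T2]
      have e : (Nat.factorial (2*(n+1+1)) : ℝ)
          = (2*n+4)*(2*n+3) * (Nat.factorial (2*(n+1)) : ℝ) := by
        rw [show 2*(n+1+1) = 2*(n+1)+1+1 by ring, Nat.factorial_succ, Nat.factorial_succ]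
        push_cast; ring
      rw [e]
      have hf : (0:ℝ) ≤ (Nat.factorial (2*(n+1)) : ℝ) := by positivity
      push_cast
      have hn : (0:ℝ) ≤ (n:ℝ) := by positivity
      calc _ = (4 * (1 + ((n:ℝ)+1)^2)) * ((4:ℝ)^(n+1) * ∑ m ∈ Finset.range (n+2), (T2 (n+1) m : ℝ)) := by
            ring
        _ ≤ (4 * (1 + ((n:ℝ)+1)^2)) * (2 * (Nat.factorial (2*(n+1)) : ℝ)) := by gcongr
        _ ≤ ((2*n+4)*(2*n+3)) * (2 * (Nat.factorial (2*(n+1)) : ℝ)) := by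
            exact mul_le_mul_of_nonneg_right (by nlinarith) (by positivity)
        _ = _ := by ring
  rcases n with _ | n
  · simp [T2]
  · exact key n

lemma four_T2_le (n m : ℕ) : (4:ℝ)^n * (T2 n m : ℝ) ≤ 2 * (Nat.factorial (2*n) : ℝ) := by
  rcases Nat.lt_or_ge n m with h | h
  · rw [T2_zero_of_lt n m h]; simp
  · refine le_trans ?_ (sum_T2_le n)
    gcongr
    exact Finset.single_le_sum (f := fun m => (T2 n m : ℝ)) (fun _ _ => by positivity)
      (Finset.mem_range.2 (by omega))

lemma abs_aC (n m : ℕ) : |aC n m| = (4:ℝ)^(n-m) * T2 n m := by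
  unfold aC
  rw [abs_mul, abs_pow]; simp

noncomputable def cC (m n : ℕ) : ℝ := aC n m / (Nat.factorial (2*n) : ℝ)

lemma abs_cC (m n : ℕ) : |cC m n| ≤ 2 := by
  unfold cC
  rw [abs_div, abs_aC, Nat.abs_cast, div_le_iff₀ (by positivity)]
  refine le_trans ?_ (four_T2_le n m)
  gcongr
  · norm_num
  · omega

lemma cC_rec (m n : ℕ) : (2*n+2)*(2*n+1) * cC (m+1) (n+1) + 4*(n:ℝ)^2 * cC (m+1) n = cC m n := by
  unfold cC
  rw [aC_rec, show 2*(n+1) = 2*n+1+1 by ring, Nat.factorial_succ, Nat.factorial_succ]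
  have : (Nat.factorial (2*n) : ℝ) ≠ 0 := by positivity
  push_cast
  field_simp
  ring

lemma summ_aux {s : ℝ} (hs0 : 0 < s) (hs : s < 1) (K : ℝ) :
    Summable (fun n : ℕ => K * (n+1) * (2*n) * (s^(2*n) / s^2)) := by
  have hs2 : ‖s^2‖ < 1 := by
    rw [Real.norm_eq_abs, abs_of_pos (by positivity)]; nlinarith
  have h1 := summable_pow_mul_geometric_of_norm_lt_one 1 hs2
  have h2 := summable_pow_mul_geometric_of_norm_lt_one 2 hs2
  refine ((h1.add h2).mul_left (2 * K / s^2)).congr ?_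
  intro n
  rw [pow_mul]; field_simp; ring

lemma deriv_series (c : ℕ → ℝ) (e : ℕ → ℕ) (K : ℝ) (hK : ∀ n, |c n| ≤ K * (n+1))
    (he : ∀ n, e n ≤ 2*n) (he' : ∀ n, 2*n-1 ≤ e n) (t : ℝ) (ht : |t| < 1) :
    HasDerivAt (fun t => ∑' n, c n * t^(e n)) (∑' n, c n * (e n * t^(e n - 1))) t ∧
    Summable (fun n => c n * (e n * t^(e n - 1))) := by
  obtain ⟨s, hs1, hs2⟩ := exists_between ht
  have hs0 : 0 < s := lt_of_le_of_lt (abs_nonneg t) hs1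
  have hK0 : 0 ≤ K := by
    have := (abs_nonneg _).trans (hK 0); simpa using this
  have hb : ∀ n y, y ∈ Metric.ball (0:ℝ) s →
      ‖c n * (e n * y^(e n - 1))‖ ≤ K * (n+1) * (2*n) * (s^(2*n) / s^2) := by
    intro n y hy
    have hy' : |y| < s := by simpa using hy
    rw [Real.norm_eq_abs, abs_mul, abs_mul, abs_pow, Nat.abs_cast, mul_assoc (K * ((n:ℝ)+1))]
    have hen : (e n : ℝ) ≤ 2*n := by exact_mod_cast he n
    have hp : |y|^(e n - 1) ≤ s^(2*n)/s^2 ∨ n = 0 := by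
      rcases n with _ | n
      · right; rfl
      · left
        rw [show 2*(n+1) = 2*n+2 by ring, pow_add, mul_div_assoc, div_self (by positivity), mul_one]
        calc |y|^(e (n+1) - 1) ≤ s^(e (n+1) - 1) := by gcongr
          _ ≤ s^(2*n) := pow_le_pow_of_le_one hs0.le hs2.le (by have := he' (n+1); omega)
    rcases hp with hp | rfl
    · have := hK n
      gcongr
    · have := he 0
      have h0 : e 0 = 0 := by omega
      simp [h0]
  have htm : t ∈ Metric.ball (0:ℝ) s := by simpa using hs1
  have hu := summ_aux hs0 hs2 K
  refine ⟨?_, Summable.of_norm_bounded hu (fun n => hb n t htm)⟩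
  refine hasDerivAt_tsum_of_isPreconnected hu Metric.isOpen_ball
    (convex_ball (0:ℝ) s).isPreconnected (g := fun n t => c n * t^(e n))
    (g' := fun n t => c n * (e n * t^(e n - 1))) (y₀ := 0) ?_ hb ?_ ?_ htm
  · intro n y _
    exact (hasDerivAt_pow (e n) y).const_mul (c n)
  · simpa using hs0
  · apply summable_of_ne_finset_zero (s := {0})
    intro n hn
    have : e n ≠ 0 := by have := he' n; simp at hn; omega
    simp [this]

noncomputable def S (m : ℕ) (t : ℝ) : ℝ := ∑' n, cC m n * t^(2*n)
noncomputable def S1 (m : ℕ) (t : ℝ) : ℝ := ∑' n, (cC m n * (2*n)) * t^(2*n-1)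
noncomputable def S2 (m : ℕ) (t : ℝ) : ℝ := ∑' n, (cC m n * (2*n)) * ((2*n-1 : ℕ) * t^(2*n-1-1))

lemma S_deriv (m : ℕ) (t : ℝ) (ht : |t| < 1) : HasDerivAt (S m) (S1 m t) t ∧
    Summable (fun n => (cC m n * (2*n)) * t^(2*n-1)) := by
  have := deriv_series (cC m) (fun n => 2*n) 2 (fun n => (abs_cC m n).trans (by
    have : (0:ℝ) ≤ n := by positivity
    linarith)) (fun n => le_rfl) (fun n => by omega) t ht
  have e : ∀ n : ℕ, cC m n * (((2*n : ℕ):ℝ) * t^(2*n-1)) = (cC m n * (2*n)) * t^(2*n-1) := by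
    intro n; push_cast; ring
  simp only [e] at this
  exact this

lemma S1_deriv (m : ℕ) (t : ℝ) (ht : |t| < 1) : HasDerivAt (S1 m) (S2 m t) t ∧
    Summable (fun n : ℕ => (cC m n * (2*n)) * ((2*n-1 : ℕ) * t^(2*n-1-1))) := by
  exact deriv_series (fun n => cC m n * (2*n)) (fun n => 2*n-1) 4 (fun n => by
    rw [abs_mul]
    have h := abs_cC m n
    have : (0:ℝ) ≤ n := by positivity
    rw [abs_of_nonneg (a := 2*(n:ℝ)) (by positivity)]
    nlinarith) (fun n => by simp) (fun n => le_rfl) t ht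

lemma S_ode (m : ℕ) (t : ℝ) (ht : |t| < 1) :
    (1 + t^2) * S2 (m+1) t + t * S1 (m+1) t = S m t := by
  obtain ⟨-, h1⟩ := S_deriv (m+1) t ht
  obtain ⟨-, h2⟩ := S1_deriv (m+1) t ht
  have e : S2 (m+1) t = ∑' n : ℕ, (2*n+2)*(2*n+1) * cC (m+1) (n+1) * t^(2*n) := by
    unfold S2
    rw [h2.tsum_eq_zero_add]
    simp only [Nat.cast_zero, mul_zero, zero_mul, zero_add]
    congr 1; ext n
    rw [show 2*(n+1)-1 = 2*n+1 by omega]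
    push_cast
    try simp only [Nat.add_sub_cancel]
    ring
  have h3 : Summable (fun n : ℕ => (2*n+2)*(2*n+1) * cC (m+1) (n+1) * t^(2*n)) := by
    refine ((summable_nat_add_iff 1).2 h2).congr ?_
    intro n
    rw [show 2*(n+1)-1 = 2*n+1 by omega]
    push_cast
    try simp only [Nat.add_sub_cancel]
    ring
  rw [add_mul, one_mul]
  nth_rewrite 1 [e]
  unfold S1 S2 S
  rw [← tsum_mul_left, ← tsum_mul_left, ← h3.tsum_add (h2.mul_left _),
    ← (h3.add (h2.mul_left _)).tsum_add (h1.mul_left _)]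
  congr 1; ext n
  rw [← cC_rec m n]
  rcases n with _ | n
  · simp
  · rw [show 2*(n+1)-1 = 2*n+1 by omega]
    push_cast
    try simp only [Nat.add_sub_cancel]
    ring

lemma eq_of_deriv {f g f' : ℝ → ℝ} (hf : ∀ t, |t| < 1 → HasDerivAt f (f' t) t)
    (hg : ∀ t, |t| < 1 → HasDerivAt g (f' t) t) (h0 : f 0 = g 0) (t : ℝ) (ht : |t| < 1) :
    f t = g t := by
  have hm : ∀ x, x ∈ Metric.ball (0:ℝ) 1 ↔ |x| < 1 := by intro x; simp
  refine Metric.isOpen_ball.eqOn_of_deriv_eq (s := Metric.ball (0:ℝ) 1) (x := 0)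
    (convex_ball (0:ℝ) 1).isPreconnected
    (fun x hx => (hf x ((hm x).1 hx)).differentiableAt.differentiableWithinAt)
    (fun x hx => (hg x ((hm x).1 hx)).differentiableAt.differentiableWithinAt)
    (fun x hx => ?_) (by simp) h0 ((hm t).2 ht)
  rw [(hf x ((hm x).1 hx)).deriv, (hg x ((hm x).1 hx)).deriv]

lemma arsinh_pow_deriv (j : ℕ) (t : ℝ) :
    HasDerivAt (fun t => Real.arsinh t ^ (j+1) / (Nat.factorial (j+1) : ℝ))
      (Real.arsinh t ^ j / (Nat.factorial j : ℝ) / √(1 + t^2)) t := by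
  have := ((Real.hasDerivAt_arsinh t).pow (j+1)).div_const (Nat.factorial (j+1) : ℝ)
  refine this.congr_deriv ?_
  rw [Nat.factorial_succ]
  push_cast
  try simp only [Nat.add_sub_cancel]
  have : √(1 + t^2) ≠ 0 := by positivity
  field_simp

lemma S_eq (m : ℕ) : ∀ t : ℝ, |t| < 1 →
    S m t = Real.arsinh t ^ (2*m) / (Nat.factorial (2*m) : ℝ) := by
  induction m with
  | zero =>
    intro t _
    unfold S
    rw [tsum_eq_single 0]
    · simp [cC, aC, T2]
    · intro n hn
      obtain ⟨n, rfl⟩ := Nat.exists_eq_succ_of_ne_zero hn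
      simp [cC, aC, T2]
  | succ m ih =>
    have hz : ∀ t : ℝ, |t| < 1 → √(1+t^2) * S1 (m+1) t
        = Real.arsinh t ^ (2*m+1) / (Nat.factorial (2*m+1) : ℝ) := by
      refine eq_of_deriv (f := fun t => √(1+t^2) * S1 (m+1) t) (f' := fun t => Real.arsinh t ^ (2*m) / (Nat.factorial (2*m) : ℝ) / √(1 + t^2))
        ?_ (fun t _ => arsinh_pow_deriv (2*m) t) ?_
      · intro t ht
        have hp : (0:ℝ) < 1 + t^2 := by positivity
        have hs : HasDerivAt (fun t : ℝ => √(1+t^2)) (t / √(1+t^2)) t := by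
          have := (((hasDerivAt_pow 2 t).const_add 1).sqrt hp.ne')
          refine this.congr_deriv ?_
          have : √(1 + t^2) ≠ 0 := by positivity
          field_simp
          norm_num
          try ring
        have := hs.mul (S1_deriv (m+1) t ht).1
        refine this.congr_deriv ?_
        rw [← ih t ht, ← S_ode m t ht]
        have h1 : √(1 + t^2) ≠ 0 := by positivity
        have h2 : √(1 + t^2)^2 = 1 + t^2 := Real.sq_sqrt hp.le
        field_simp
        rw [h2]; ring
      · have : S1 (m+1) 0 = 0 := by
          unfold S1
          rw [← tsum_zero (α := ℝ) (β := ℕ)]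
          congr 1; ext n
          rcases n with _ | n
          · simp
          · rw [show 2*(n+1)-1 = 2*n+1 by omega]; simp
        simp [this]
    refine eq_of_deriv (f' := S1 (m+1)) (fun t ht => (S_deriv (m+1) t ht).1) ?_ ?_
    · intro t ht
      refine (arsinh_pow_deriv (2*m+1) t).congr_deriv ?_
      rw [← hz t ht]
      have h1 : √(1 + t^2) ≠ 0 := by positivity
      field_simp
    · unfold S
      rw [tsum_eq_single 0]
      · simp [cC, aC, T2]
      · intro n hn
        simp [hn]

lemma weight_bound (k : ℤ) : ∃ C : ℝ, 0 ≤ C ∧ ∀ m : ℕ, |((2 * (m:ℝ) + 1) ^ k)⁻¹| ≤ C * 4^m := by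
  have hs : Summable (fun m : ℕ => (m:ℝ)^k.natAbs * (1/4:ℝ)^m) :=
    summable_pow_mul_geometric_of_norm_lt_one _ (by norm_num)
  obtain ⟨C, hC⟩ := hs.tendsto_atTop_zero.bddAbove_range
  have hC' : ∀ m : ℕ, (m:ℝ)^k.natAbs * (1/4:ℝ)^m ≤ C := fun m => hC ⟨m, rfl⟩
  have hC0 : 0 ≤ C := le_trans (by positivity) (hC' 0)
  refine ⟨max 1 (3^k.natAbs * C), by positivity, fun m => ?_⟩
  have h1 : (1:ℝ) ≤ 2*(m:ℝ)+1 := by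
    have : (0:ℝ) ≤ m := by positivity
    linarith
  rw [abs_of_nonneg (by positivity), ← zpow_neg]
  have h2 : (2*(m:ℝ)+1)^(-k) ≤ (2*(m:ℝ)+1)^k.natAbs := by
    rw [← zpow_natCast]
    exact zpow_le_zpow_right₀ h1 (by omega)
  refine h2.trans ?_
  rcases m with _ | m
  · simp
  · have h3 : 2*((m+1:ℕ):ℝ)+1 ≤ 3*((m+1:ℕ):ℝ) := by
      push_cast
      have : (0:ℝ) ≤ m := by positivity
      linarith
    calc _ ≤ (3*((m+1:ℕ):ℝ))^k.natAbs := by gcongr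
      _ = 3^k.natAbs * (((m+1:ℕ):ℝ)^k.natAbs * (1/4)^(m+1)) * 4^(m+1) := by
        rw [mul_pow, mul_assoc, mul_assoc, ← mul_pow (1/4:ℝ) 4 (m+1)]; norm_num
      _ ≤ 3^k.natAbs * C * 4^(m+1) := by
        gcongr; exact hC' (m+1)
      _ ≤ _ := by gcongr; exact le_max_right _ _

theorem statement0 (k : ℤ) (t : ℝ) (ht : |t| < 1) :
    ∑' m : ℕ, (Real.arsinh t) ^ (2 * m) /
        ((Nat.factorial (2 * m) : ℝ) * (2 * (m : ℝ) + 1) ^ k) =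
    ∑' n : ℕ, (polyCauchy2 k n : ℝ) * t ^ (2 * n) / (Nat.factorial (2 * n) : ℝ) := by
  obtain ⟨C, hC0, hC⟩ := weight_bound k
  set w : ℕ → ℝ := fun m => ((2 * (m:ℝ) + 1) ^ k)⁻¹ with hw
  have hL : ∀ m : ℕ, (Real.arsinh t) ^ (2 * m) /
        ((Nat.factorial (2 * m) : ℝ) * (2 * (m : ℝ) + 1) ^ k)
        = ∑' n, w m * (cC m n * t^(2*n)) := by
    intro m
    rw [tsum_mul_left]
    have := S_eq m t ht
    unfold S at this
    rw [this, hw]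
    rw [← div_div, div_eq_inv_mul]
  have hR0 : ∀ n m : ℕ, m ∉ Finset.range (n+1) → w m * (cC m n * t^(2*n)) = 0 := by
    intro n m hm
    have : n < m := by simpa using hm
    simp [cC, aC, T2_zero_of_lt n m this]
  have hR : ∀ n : ℕ, (polyCauchy2 k n : ℝ) * t ^ (2 * n) / (Nat.factorial (2 * n) : ℝ)
        = ∑' m, w m * (cC m n * t^(2*n)) := by
    intro n
    rw [tsum_eq_sum (s := Finset.range (n+1)) (fun m hm => hR0 n m hm)]
    unfold polyCauchy2
    push_cast
    rw [Finset.sum_mul, Finset.sum_div]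
    refine Finset.sum_congr rfl fun m _ => ?_
    simp only [hw, cC, aC]
    field_simp
  simp_rw [hL, hR]
  refine Summable.tsum_comm (f := fun m n => w m * (cC m n * t^(2*n))) ?_ |>.symm
  rw [← summable_norm_iff]
  have hb : ∀ n m : ℕ, ‖w m * (cC m n * t^(2*n))‖
      ≤ C * (4^n * T2 n m) / (Nat.factorial (2*n) : ℝ) * |t|^(2*n) := by
    intro n m
    rcases Nat.lt_or_ge n m with h | h
    · rw [hR0 n m (by simpa using h), T2_zero_of_lt n m h]; simp
    · rw [Real.norm_eq_abs, abs_mul, abs_mul, abs_pow]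
      unfold cC
      rw [abs_div, abs_aC, Nat.abs_cast]
      have e : (4:ℝ)^n = 4^m * 4^(n-m) := by rw [← pow_add]; congr 1; omega
      calc _ ≤ (C * 4^m) * (4^(n-m) * T2 n m / (Nat.factorial (2*n) : ℝ) * |t|^(2*n)) := by
            gcongr; exact hC m
        _ = _ := by rw [e]; ring
  have hsw : Summable (fun p : ℕ × ℕ => ‖w p.2 * (cC p.2 p.1 * t^(2*p.1))‖) := by
    rw [summable_prod_of_nonneg (fun _ => norm_nonneg _)]
    constructor
    · intro n
      apply summable_of_ne_finset_zero (s := Finset.range (n+1))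
      intro m hm
      simp only [hR0 n m hm, norm_zero]
    · have hg : Summable (fun n : ℕ => 2 * C * (|t|^2)^n) := by
        refine (summable_geometric_of_lt_one (by positivity) ?_).mul_left _
        have := abs_nonneg t
        nlinarith
      refine Summable.of_nonneg_of_le (fun n => tsum_nonneg fun _ => norm_nonneg _) ?_ hg
      intro n
      simp only
      rw [tsum_eq_sum (s := Finset.range (n+1)) (fun m hm => by simp only [hR0 n m hm, norm_zero])]
      calc _ ≤ ∑ m ∈ Finset.range (n+1), C * (4^n * T2 n m) / (Nat.factorial (2*n) : ℝ) * |t|^(2*n) :=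
            Finset.sum_le_sum fun m _ => hb n m
        _ = C * (4^n * ∑ m ∈ Finset.range (n+1), (T2 n m : ℝ)) / (Nat.factorial (2*n) : ℝ) * |t|^(2*n) := by
            rw [Finset.mul_sum, Finset.mul_sum, Finset.sum_div, Finset.sum_mul]
        _ ≤ C * (2 * (Nat.factorial (2*n) : ℝ)) / (Nat.factorial (2*n) : ℝ) * |t|^(2*n) := by
            have := sum_T2_le n
            exact mul_le_mul_of_nonneg_right (div_le_div_of_nonneg_right
              (mul_le_mul_of_nonneg_left this hC0) (by positivity)) (by positivity)
        _ = _ := by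
            rw [pow_mul]; field_simp
  exact (Equiv.prodComm ℕ ℕ).summable_iff.1 hsw
end

section
/- For every integer n ≥ 0, ∑_{i=0}^{n} binom(2n, 2i) · 𝔠_{2i} · 𝔠_{2n-2i} = (2n)! · ∑_{l=0}^{n} (-1)^{n-l} (2n-2l-3)!! (2l-1) / (2^{n-l} (n-l)! (2l)!) · 𝔠_{2l}. -/
/-- Cauchy numbers with level 2: `cauchy2 n = 𝔠_{2n}`. -/
def cauchy2 (n : ℕ) : ℚ :=
  ∑ m ∈ Finset.range (n + 1), (-4 : ℚ) ^ (n - m) * (T2 n m : ℚ) / (2 * (m : ℚ) + 1)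

/-- `odFact i = (2i-1)!!`, with `odFact 0 = (-1)!! = 1`. -/
def odFact : ℕ → ℚ
  | 0 => 1
  | i + 1 => (2 * (i : ℚ) + 1) * odFact i

/-- `ddf j = (2j-1)!!`, the odd double factorial extended to all integers:
for `j ≥ 0` it is `(2j-1)(2j-3)⋯1` (with `(-1)!! = 1`), and for `j = -i < 0`
it is `(-(2i+1))!! = (-1)^i/(2i-1)!!`. -/
def ddf (j : ℤ) : ℚ :=
  if 0 ≤ j then odFact j.toNat else (-1 : ℚ) ^ (-j).toNat / odFact (-j).toNat

open PowerSeries in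
/-- the even series with coefficients `a`. -/
noncomputable def evS (a : ℕ → ℚ) : PowerSeries ℚ :=
  PowerSeries.mk fun k => if Even k then a (k / 2) else 0

lemma evS_even (a : ℕ → ℚ) (n : ℕ) : PowerSeries.coeff (2 * n) (evS a) = a n := by
  simp [evS]

lemma evS_odd (a : ℕ → ℚ) (n : ℕ) : PowerSeries.coeff (2 * n + 1) (evS a) = 0 := by
  simp [evS]

lemma sum_even (f : ℕ → ℚ) (hf : ∀ k, f (2 * k + 1) = 0) (n : ℕ) :
    ∑ k ∈ Finset.range (2 * n + 1), f k = ∑ i ∈ Finset.range (n + 1), f (2 * i) := by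
  induction n with
  | zero => simp
  | succ n ih =>
    rw [Finset.sum_range_succ _ (n + 1), ← ih, show 2 * (n + 1) + 1 = 2 * n + 1 + 1 + 1 by ring,
      Finset.sum_range_succ, Finset.sum_range_succ, hf]
    simp [mul_add]

lemma evS_mul (a b : ℕ → ℚ) (n : ℕ) :
    PowerSeries.coeff (2 * n) (evS a * evS b) = ∑ i ∈ Finset.range (n + 1), a i * b (n - i) := by
  rw [PowerSeries.coeff_mul, Finset.Nat.sum_antidiagonal_eq_sum_range_succ_mk]
  simp only []
  rw [Nat.succ_eq_add_one, sum_even]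
  · refine Finset.sum_congr rfl fun i hi => ?_
    rw [← Nat.mul_sub, evS_even, evS_even]
  · intro k
    rw [evS_odd, zero_mul]

/-- coefficients of sqrt(1+x^2). -/
def sqc (k : ℕ) : ℚ := - ((-1 : ℚ) ^ k * ddf ((k : ℤ) - 1) / (2 ^ k * (Nat.factorial k : ℚ)))

lemma ddf_nat (k : ℕ) : ddf (k : ℤ) = odFact k := by simp [ddf]

lemma ddf_rec (k : ℕ) : ddf (k : ℤ) = (2 * (k : ℚ) - 1) * ddf ((k : ℤ) - 1) := by
  cases k with
  | zero => simp [ddf, odFact]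
  | succ k =>
    rw [ddf_nat]
    push_cast
    rw [add_sub_cancel_right, ddf_nat, odFact]
    ring

lemma sq_zero : sqc 0 = 1 := by simp [sqc, ddf, odFact]

lemma sq_rec (k : ℕ) : (2 * (k : ℚ) + 2) * sqc (k + 1) = (1 - 2 * (k : ℚ)) * sqc k := by
  unfold sqc
  push_cast
  rw [add_sub_cancel_right, ddf_rec, Nat.factorial_succ]
  push_cast
  have h1 : (Nat.factorial k : ℚ) ≠ 0 := by positivity
  have h2 : (k : ℚ) + 1 ≠ 0 := by positivity
  field_simp
  ring

noncomputable def SS : PowerSeries ℚ := evS sqc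

open PowerSeries

local notation "∂" => PowerSeries.derivative ℚ

lemma coeff_one_add_sq_mul (f : PowerSeries ℚ) (n : ℕ) :
    coeff (n + 2) ((1 + X ^ 2) * f) = coeff (n + 2) f + coeff n f := by
  rw [add_mul, one_mul, map_add, coeff_X_pow_mul]

lemma coeff_one_add_sq_mul_zero (f : PowerSeries ℚ) :
    coeff 0 ((1 + X ^ 2) * f) = coeff 0 f := by
  simp

lemma coeff_one_add_sq_mul_one (f : PowerSeries ℚ) :
    coeff 1 ((1 + X ^ 2) * f) = coeff 1 f := by
  rw [add_mul, one_mul, map_add, coeff_X_pow_mul']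
  simp

lemma SS_de : (1 + X ^ 2) * ∂ SS = X * SS := by
  ext n
  rcases n with _ | _ | n
  · rw [coeff_one_add_sq_mul_zero, coeff_derivative]
    have := evS_odd sqc 0
    simp_all [SS]
  · rw [zero_add, coeff_one_add_sq_mul_one, coeff_derivative]
    have h := evS_even sqc 1
    have h0 := evS_even sqc 0
    have := sq_rec 0
    rw [show 1 = 0 + 1 from rfl, coeff_succ_X_mul]
    simp [SS] at *
    rw [h, h0]
    linarith
  · rw [coeff_one_add_sq_mul, coeff_derivative, coeff_derivative, coeff_succ_X_mul]
    rcases Nat.even_or_odd' n with ⟨k, rfl | rfl⟩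
    · rw [SS, show 2 * k + 1 + 1 + 1 = 2 * (k + 1) + 1 by ring, evS_odd, evS_odd]
      simp
    · rw [SS, show 2 * k + 1 + 1 + 1 + 1 = 2 * (k + 1 + 1) by ring,
        show 2 * k + 1 + 1 = 2 * (k + 1) by ring, evS_even, evS_even]
      have := sq_rec (k + 1)
      push_cast at *
      linarith

lemma de_zero (e : PowerSeries ℚ) (h0 : coeff 0 e = 0)
    (h : (1 + X ^ 2) * ∂ e = 2 * X * e) : e = 0 := by
  ext n
  rw [map_zero]
  induction n using Nat.strong_induction_on with
  | _ n ih =>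
    rw [mul_assoc, two_mul] at h
    rcases n with _ | _ | _ | n
    · exact h0
    · have := congrArg (coeff 0) h
      rw [coeff_one_add_sq_mul_zero, coeff_derivative] at this
      simpa using this
    · have := congrArg (coeff 1) h
      rw [coeff_one_add_sq_mul_one, coeff_derivative, map_add, show 1 = 0 + 1 from rfl, coeff_succ_X_mul, h0] at this
      norm_num at this
      exact this
    · have := congrArg (coeff (n + 2)) h
      rw [coeff_one_add_sq_mul, coeff_derivative, coeff_derivative, map_add, coeff_succ_X_mul,
        ih (n + 1) (by omega)] at this
      have h3 : ((n + 2 : ℕ) : ℚ) + 1 ≠ 0 := by positivity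
      simp only [zero_mul, add_zero] at this
      exact (mul_eq_zero.mp this).resolve_right h3

lemma SS_sq : SS ^ 2 = 1 + X ^ 2 := by
  rw [← sub_eq_zero]
  have hc : coeff 0 SS = 1 := by
    have := evS_even sqc 0
    rw [sq_zero] at this
    exact this
  apply de_zero
  · rw [coeff_zero_eq_constantCoeff] at *
    simp [hc]
  · have := SS_de
    have hX : ∂ (X : PowerSeries ℚ) = 1 := by simp
    simp only [map_sub, map_add, Derivation.leibniz_pow, hX, Derivation.map_one_eq_zero]
    simp only [smul_eq_mul, nsmul_eq_mul]
    push_cast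
    linear_combination 2 * SS * this

noncomputable def AA : PowerSeries ℚ :=
  PowerSeries.mk fun n => coeff (n - 1) (SS⁻¹) / n

lemma SS_const : constantCoeff SS = 1 := by
  have := evS_even sqc 0
  rw [sq_zero, mul_zero, coeff_zero_eq_constantCoeff_apply] at this
  exact this

lemma AA_de : SS * ∂ AA = 1 := by
  have : ∂ AA = SS⁻¹ := by
    ext n
    rw [coeff_derivative, AA, coeff_mk]
    have h3 : (n : ℚ) + 1 ≠ 0 := by positivity
    push_cast
    field_simp
    try simp
  rw [this, PowerSeries.mul_inv_cancel]
  rw [SS_const]; exact one_ne_zero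

lemma AA_const : constantCoeff AA = 0 := by
  rw [← coeff_zero_eq_constantCoeff_apply, AA, coeff_mk]; simp

lemma AA_X : X ∣ AA := by
  rw [X_dvd_iff, AA_const]

/-- the operator (S d/dx)^2 -/
noncomputable def LL (f : PowerSeries ℚ) : PowerSeries ℚ := (1 + X ^ 2) * ∂ (∂ f) + X * ∂ f

lemma LL_eq (f : PowerSeries ℚ) : LL f = SS * ∂ (SS * ∂ f) := by
  have h : SS * ∂ SS = X := by
    have h1 := SS_de
    rw [← SS_sq] at h1
    have h2 : SS ≠ 0 := by
      intro h; have := SS_const; simp [h] at this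
    apply mul_left_cancel₀ h2
    linear_combination h1
  rw [LL, Derivation.leibniz, smul_eq_mul, smul_eq_mul, ← SS_sq]
  linear_combination (- ∂ f) * h

lemma LL_coeff (f : PowerSeries ℚ) (n : ℕ) :
    coeff n (LL f) = ((n : ℚ) + 2) * (n + 1) * coeff (n + 2) f + (n : ℚ) ^ 2 * coeff n f := by
  rw [LL, map_add]
  rcases n with _ | _ | n
  · rw [coeff_one_add_sq_mul_zero, coeff_derivative, coeff_derivative]
    simp
    ring
  · rw [zero_add, coeff_one_add_sq_mul_one, coeff_derivative, coeff_derivative,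
      show 1 = 0 + 1 from rfl, coeff_succ_X_mul, coeff_derivative]
    push_cast
    ring
  · rw [coeff_one_add_sq_mul, coeff_derivative, coeff_derivative, coeff_succ_X_mul,
      coeff_derivative, coeff_derivative]
    push_cast
    ring

lemma D_pow (k : ℕ) : SS * ∂ (AA ^ (k + 1)) = ((k : ℚ) + 1) • AA ^ k := by
  rw [Derivation.leibniz_pow, add_tsub_cancel_right, smul_eq_mul, ← Nat.cast_smul_eq_nsmul ℚ,
    mul_smul_comm]
  push_cast
  congr 1
  linear_combination AA ^ k * AA_de

lemma LL_pow (k : ℕ) : LL (AA ^ (k + 2)) = (((k : ℚ) + 2) * (k + 1)) • AA ^ k := by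
  rw [LL_eq, D_pow, Derivation.map_smul, mul_smul_comm, D_pow, smul_smul]
  push_cast
  congr 1
  ring

lemma LL_add (f g : PowerSeries ℚ) : LL (f + g) = LL f + LL g := by
  simp only [LL, map_add]; ring

lemma LL_smul (c : ℚ) (g : PowerSeries ℚ) : LL (c • g) = c • LL g := by
  simp only [LL, Derivation.map_smul, mul_smul_comm, smul_add]

lemma T2_zero (n : ℕ) : ∀ m, n < m → T2 n m = 0 := by
  induction n with
  | zero => intro m hm; cases m with
    | zero => omega
    | succ m => simp [T2]
  | succ n ih => intro m hm; cases m with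
    | zero => omega
    | succ m => rw [T2, ih m (by omega), ih (m + 1) (by omega)]; simp

def ww (n m : ℕ) : ℚ := (-4 : ℚ) ^ (n - m) * (T2 n m : ℚ)

lemma ww_rec (n m : ℕ) : ww (n + 1) (m + 1) = ww n m - 4 * (n : ℚ) ^ 2 * ww n (m + 1) := by
  unfold ww
  rw [T2, Nat.add_sub_add_right]
  by_cases h : m + 1 ≤ n
  · obtain ⟨d, rfl⟩ := Nat.exists_eq_add_of_le h
    rw [show m + 1 + d - m = d + 1 by omega, show m + 1 + d - (m + 1) = d by omega]
    push_cast
    ring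
  · rw [T2_zero n (m + 1) (by omega)]
    push_cast
    ring

noncomputable def WW (m : ℕ) : PowerSeries ℚ := evS fun n => ww n m / (Nat.factorial (2 * n) : ℚ)

lemma fact2 (n : ℕ) : (Nat.factorial (2 * (n + 1)) : ℚ) =
    (2 * n + 2) * (2 * n + 1) * (Nat.factorial (2 * n) : ℚ) := by
  rw [show 2 * (n + 1) = 2 * n + 1 + 1 by ring, Nat.factorial_succ, Nat.factorial_succ]
  push_cast; ring

lemma LL_ext (f g : PowerSeries ℚ) (N : ℕ) (h : ∀ n, n + 2 < N → coeff n (LL f) = coeff n (LL g))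
    (h0 : coeff 0 f = coeff 0 g) (h1 : coeff 1 f = coeff 1 g) :
    ∀ n < N, coeff n f = coeff n g := by
  intro n
  induction n using Nat.strong_induction_on with
  | _ n ih =>
    intro hn
    rcases n with _ | _ | n
    · exact h0
    · exact h1
    · have := h n (by omega)
      rw [LL_coeff, LL_coeff, ih n (by omega) (by omega)] at this
      have h3 : ((n : ℚ) + 2) * (n + 1) ≠ 0 := by positivity
      exact mul_left_cancel₀ h3 (add_right_cancel this)

lemma pow_coeff (k n : ℕ) (h : n < k) : coeff n (AA ^ k) = 0 := by
  exact X_pow_dvd_iff.mp (pow_dvd_pow_of_dvd AA_X k) n h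

lemma LL_WW (m : ℕ) : LL (WW (m + 1)) = WW m := by
  ext n
  rw [LL_coeff]
  rcases Nat.even_or_odd' n with ⟨k, rfl | rfl⟩
  · rw [WW, WW, show 2 * k + 2 = 2 * (k + 1) by ring, evS_even, evS_even, evS_even, fact2, ww_rec]
    push_cast
    have h1 : (Nat.factorial (2 * k) : ℚ) ≠ 0 := by positivity
    have h2 : (k : ℚ) + 1 ≠ 0 := by positivity
    have h3 : 2 * (k : ℚ) + 1 ≠ 0 := by positivity
    field_simp
    ring
  · rw [WW, WW, show 2 * k + 1 + 2 = 2 * (k + 1) + 1 by ring, evS_odd, evS_odd, evS_odd]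
    simp

lemma WW_eq (m : ℕ) : AA ^ (2 * m) = (Nat.factorial (2 * m) : ℚ) • WW m := by
  induction m with
  | zero =>
    ext n
    simp only [mul_zero, pow_zero, Nat.factorial_zero, Nat.cast_one, one_smul]
    rcases Nat.even_or_odd' n with ⟨k, rfl | rfl⟩
    · rw [WW, evS_even, coeff_one]
      cases k with
      | zero => simp [ww, T2]
      | succ k => simp [ww, T2]
    · rw [WW, evS_odd, coeff_one]; simp
  | succ m ih =>
    ext n
    apply LL_ext _ _ (n + 1) _ _ _ n (by omega)
    · intro j _
      rw [LL_smul, LL_WW, fact2, show 2 * (m + 1) = 2 * m + 2 by ring, LL_pow, ih, smul_smul]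
      push_cast
      rfl
    · rw [pow_coeff _ _ (by omega), map_smul, WW, show 0 = 2 * 0 by rfl, evS_even]
      simp [ww, T2]
    · rw [pow_coeff _ _ (by omega), map_smul, WW, show 1 = 2 * 0 + 1 by rfl, evS_odd]
      simp

noncomputable def FF : PowerSeries ℚ := evS fun n => cauchy2 n / (Nat.factorial (2 * n) : ℚ)

noncomputable def FN (N : ℕ) : PowerSeries ℚ :=
  ∑ m ∈ Finset.range N, (1 / (2 * (m : ℚ) + 1)) • WW m

noncomputable def HN (N : ℕ) : PowerSeries ℚ :=
  ∑ m ∈ Finset.range N, (1 / (Nat.factorial (2 * m + 1) : ℚ)) • AA ^ (2 * m + 1)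

lemma FN_mul (N : ℕ) : FN N * AA = HN N := by
  rw [FN, HN, Finset.sum_mul]
  refine Finset.sum_congr rfl fun m _ => ?_
  rw [pow_succ, WW_eq, smul_mul_assoc, smul_mul_assoc, smul_smul, Nat.factorial_succ]
  congr 1
  push_cast
  have h1 : (Nat.factorial (2 * m) : ℚ) ≠ 0 := by positivity
  field_simp

lemma FN_coeff (N n : ℕ) (h : n < N) : coeff n FF = coeff n (FN N) := by
  rw [FN, map_sum]
  simp only [map_smul, WW]
  rcases Nat.even_or_odd' n with ⟨k, rfl | rfl⟩
  · simp only [FF, evS_even, cauchy2, smul_eq_mul]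
    rw [Finset.sum_div]
    rw [← Finset.sum_subset (Finset.range_subset_range.mpr (show k + 1 ≤ N by omega))]
    · refine Finset.sum_congr rfl fun m _ => ?_
      rw [ww]; ring
    · intro m _ hm
      rw [ww, T2_zero k m (by simpa using hm)]; simp
  · simp [FF, evS_odd]

lemma LL_HN (N : ℕ) : LL (HN (N + 1)) = HN N + LL AA := by
  induction N with
  | zero => simp [HN]
  | succ N ih =>
    rw [HN, Finset.sum_range_succ, ← HN, LL_add, ih, LL_smul, HN, HN, Finset.sum_range_succ,
      show 2 * (N + 1) + 1 = 2 * N + 1 + 2 by ring, LL_pow, smul_smul,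
      Nat.factorial_succ, Nat.factorial_succ]
    have : (1 / (((2 * N + 1 + 1 + 1) * ((2 * N + 1 + 1) * (2 * N + 1).factorial) : ℕ) : ℚ)
      * ((((2 * N + 1 : ℕ) : ℚ) + 2) * (((2 * N + 1 : ℕ) : ℚ) + 1)))
        = 1 / ((2 * N + 1).factorial : ℚ) := by
      push_cast
      have h1 : (Nat.factorial (2 * N + 1) : ℚ) ≠ 0 := by positivity
      have h2 : 2 * (N : ℚ) + 1 + 1 + 1 ≠ 0 := by positivity
      have h3 : 2 * (N : ℚ) + 1 + 1 ≠ 0 := by positivity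
      have h4 : 2 * (N : ℚ) + 1 + 2 ≠ 0 := by positivity
      field_simp
      ring
    rw [this]
    abel

lemma LL_AA : LL AA = 0 := by
  rw [LL_eq, AA_de]; simp

lemma LL_X : LL X = X := by
  rw [LL]; simp

lemma AA_one : coeff 1 AA = 1 := by
  rw [AA, coeff_mk]
  simp [SS_const]

lemma HN_zero (N : ℕ) : coeff 0 (HN N) = 0 := by
  rw [HN, map_sum]
  refine Finset.sum_eq_zero fun m _ => ?_
  rw [map_smul, pow_coeff _ _ (by omega), smul_zero]

lemma HN_one (N : ℕ) : coeff 1 (HN (N + 1)) = 1 := by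
  rw [HN, map_sum, Finset.sum_range_succ', Finset.sum_eq_zero]
  · simp [AA_one]
  intro m _
  rw [map_smul, pow_coeff _ _ (by omega), smul_zero]

lemma HN_coeff (N : ℕ) : ∀ n < 2 * N + 1, coeff n (HN N) = coeff n (X : PowerSeries ℚ) := by
  induction N with
  | zero =>
    intro n hn
    obtain rfl : n = 0 := by omega
    simp [HN]
  | succ N ih =>
    apply LL_ext
    · intro n hn
      rw [LL_HN, LL_AA, add_zero, LL_X]
      exact ih n (by omega)
    · rw [HN_zero]; simp
    · rw [HN_one]; simp

lemma FF_mul_AA : FF * AA = X := by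
  ext n
  rw [← HN_coeff (n + 1) n (by omega), ← FN_mul, coeff_mul, coeff_mul]
  refine Finset.sum_congr rfl fun p hp => ?_
  rw [FN_coeff (n + 1) p.1 (by have := Finset.HasAntidiagonal.mem_antidiagonal.mp hp; omega)]

lemma FF_sq : FF * FF = SS * (FF - X * ∂ FF) := by
  have h := FF_mul_AA
  have h2 := congrArg ∂ h
  rw [Derivation.leibniz, smul_eq_mul, smul_eq_mul] at h2
  simp only [derivative_X] at h2
  linear_combination (-FF * FF) * AA_de + SS * FF * h2 - SS * ∂ FF * h

lemma FF_aux : FF - X * ∂ FF =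
    evS fun l => (1 - 2 * (l : ℚ)) * (cauchy2 l / (Nat.factorial (2 * l) : ℚ)) := by
  ext n
  have h : coeff n (X * ∂ FF) = n * coeff n FF := by
    cases n with
    | zero => simp
    | succ n => rw [coeff_succ_X_mul, coeff_derivative]; push_cast; ring
  rw [map_sub, h, FF]
  rcases Nat.even_or_odd' n with ⟨k, rfl | rfl⟩
  · rw [evS_even, evS_even]; push_cast; ring
  · rw [evS_odd, evS_odd]; simp

theorem statement2 (n : ℕ) :
    ∑ i ∈ Finset.range (n + 1),
        (Nat.choose (2 * n) (2 * i) : ℚ) * cauchy2 i * cauchy2 (n - i) =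
    (Nat.factorial (2 * n) : ℚ) * ∑ l ∈ Finset.range (n + 1),
        (-1 : ℚ) ^ (n - l) * ddf ((n : ℤ) - l - 1) * (2 * (l : ℚ) - 1) /
          ((2 : ℚ) ^ (n - l) * (Nat.factorial (n - l) : ℚ) * (Nat.factorial (2 * l) : ℚ)) *
          cauchy2 l := by
  have h := congrArg (coeff (2 * n)) FF_sq
  rw [FF_aux, mul_comm SS, SS, FF, evS_mul, evS_mul] at h
  have h' := congrArg (fun x => (Nat.factorial (2 * n) : ℚ) * x) h
  convert h' using 1
  · rw [Finset.mul_sum]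
    refine Finset.sum_congr rfl fun i hi => ?_
    have hi : i ≤ n := by simpa [Nat.lt_succ_iff] using hi
    rw [Nat.cast_choose ℚ (show 2 * i ≤ 2 * n by omega), ← Nat.mul_sub]
    ring
  · congr 1
    refine Finset.sum_congr rfl fun i hi => ?_
    have hi : i ≤ n := by simpa [Nat.lt_succ_iff] using hi
    rw [sqc, Nat.cast_sub hi]
    ring
end

section
/- For every integer n ≥ 0, ∑_{i=0}^{n} binom(2n, 2i) · 𝔠_{2i} · 𝔠_{2(n-i)+2} = (2n)! · ∑_{l=0}^{n+1} (-1)^{n-l-1} (2l-1)(3n² - 3nl + 2l² + 4n - 3l + 1)(2n-2l-1)!! / (3 · 2^{n-l} (n-l+1)! (2l)!) · 𝔠_{2l}, where 2^{n-l} is interpreted in ℚ (so for l = n+1 it equals 1/2). -/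
open PowerSeries in
/-- Euler operator. -/
noncomputable def thE {R : Type} [CommRing R] (f : PowerSeries R) : PowerSeries R :=
  PowerSeries.X * PowerSeries.derivative R f

theorem coeff_thE {R : Type} [CommRing R] (f : PowerSeries R) (n : ℕ) :
    PowerSeries.coeff n (thE f) = (n : R) * PowerSeries.coeff n f := by
  unfold thE
  cases n with
  | zero => simp
  | succ n =>
    rw [PowerSeries.coeff_succ_X_mul, PowerSeries.coeff_derivative]
    push_cast; ring

theorem const_thE {R : Type} [CommRing R] (f : PowerSeries R) :
    PowerSeries.constantCoeff (thE f) = 0 := by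
  simp [thE]

theorem thE_mul {R : Type} [CommRing R] (f g : PowerSeries R) :
    thE (f * g) = thE f * g + f * thE g := by
  unfold thE
  rw [Derivation.leibniz]
  simp only [smul_eq_mul]
  ring

theorem thE_add {R : Type} [CommRing R] (f g : PowerSeries R) :
    thE (f + g) = thE f + thE g := by
  unfold thE; rw [map_add]; ring

theorem thE_sub {R : Type} [CommRing R] (f g : PowerSeries R) :
    thE (f - g) = thE f - thE g := by
  unfold thE; rw [map_sub]; ring

theorem thE_X {R : Type} [CommRing R] : thE (PowerSeries.X : PowerSeries R) = PowerSeries.X := by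
  unfold thE; simp

theorem thE_one {R : Type} [CommRing R] : thE (1 : PowerSeries R) = 0 := by
  unfold thE; simp

theorem thE_C {R : Type} [CommRing R] (c : R) : thE (PowerSeries.C c) = 0 := by
  unfold thE; simp

theorem thE_two {R : Type} [CommRing R] : thE (2 : PowerSeries R) = 0 := by
  have : (2 : PowerSeries R) = 1 + 1 := by norm_num
  rw [this, thE_add, thE_one, add_zero]

/-- Coefficients of the square root of 1+s. -/
def bco : ℕ → ℚ
  | 0 => 1
  | n + 1 => (1 - 2 * (n : ℚ)) / (2 * n + 2) * bco n

noncomputable def rS : PowerSeries ℚ := PowerSeries.mk bco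
noncomputable def qS : PowerSeries ℚ := rS⁻¹
noncomputable def aS : PowerSeries ℚ :=
  PowerSeries.mk fun n => PowerSeries.coeff n qS / (2 * n + 1)

theorem r_q : rS * qS = 1 := by
  unfold qS
  apply PowerSeries.mul_inv_cancel
  rw [← PowerSeries.coeff_zero_eq_constantCoeff_apply]
  simp [rS, bco]

theorem r_ode : 2 * (1 + PowerSeries.X) * thE rS = PowerSeries.X * rS := by
  have h : 2 * (1 + PowerSeries.X) * thE rS = PowerSeries.C 2 * (thE rS + PowerSeries.X * thE rS) := by
    rw [map_ofNat]; ring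
  rw [h]
  ext n
  cases n with
  | zero => simp [const_thE]
  | succ n =>
    simp only [PowerSeries.coeff_C_mul, map_add, PowerSeries.coeff_succ_X_mul, coeff_thE, rS,
      PowerSeries.coeff_mk, bco]
    push_cast
    have : (2 * (n : ℚ) + 2) ≠ 0 := by positivity
    field_simp
    ring

theorem r_sq : rS * rS = 1 + PowerSeries.X := by
  have h1 : (1 + PowerSeries.X) * thE (rS * rS) = PowerSeries.X * (rS * rS) := by
    rw [thE_mul]; linear_combination rS * r_ode
  ext n
  induction n with
  | zero => simp [rS, bco, PowerSeries.coeff_mul]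
  | succ n ih =>
    have h2 := congrArg (PowerSeries.coeff (n + 1)) h1
    rw [add_mul, one_mul, map_add, PowerSeries.coeff_succ_X_mul, PowerSeries.coeff_succ_X_mul,
      coeff_thE, coeff_thE, ih] at h2
    have : ((n + 1 : ℕ) : ℚ) ≠ 0 := by positivity
    apply mul_left_cancel₀ this
    rcases n with _ | _ | n
    · simp at h2 ⊢
      linarith
    · simp [PowerSeries.coeff_X, PowerSeries.coeff_one] at h2 ⊢
      linarith
    · simp [PowerSeries.coeff_X, PowerSeries.coeff_one] at h2 ⊢
      exact_mod_cast h2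

theorem r_ne : rS ≠ 0 := by
  intro h
  have := r_q
  rw [h, zero_mul] at this
  exact zero_ne_one this

theorem r_ode2 : 2 * rS * thE rS = PowerSeries.X := by
  apply mul_left_cancel₀ r_ne
  linear_combination r_ode + 2 * thE rS * r_sq

theorem a_ode : 2 * thE aS + aS = qS := by
  have h : 2 * thE aS = PowerSeries.C 2 * thE aS := by rw [map_ofNat]
  rw [h]
  ext n
  simp only [map_add, PowerSeries.coeff_C_mul, coeff_thE, aS, PowerSeries.coeff_mk]
  have : (2 * (n : ℚ) + 1) ≠ 0 := by positivity
  field_simp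

/-- The polynomials. -/
noncomputable def gp (n : ℕ) : Polynomial ℚ :=
  ∑ m ∈ Finset.range (n + 1), Polynomial.C ((-4 : ℚ) ^ (n - m) * (T2 n m : ℚ)) * Polynomial.X ^ (2 * m)

noncomputable def pp (n : ℕ) : Polynomial ℚ :=
  ∑ m ∈ Finset.range (n + 1),
    Polynomial.C ((-4 : ℚ) ^ (n - m) * (T2 n m : ℚ) / (2 * (m : ℚ) + 1)) * Polynomial.X ^ (2 * m + 1)

theorem pp_der (n : ℕ) : Polynomial.derivative (pp n) = gp n := by
  unfold pp gp
  rw [map_sum]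
  apply Finset.sum_congr rfl
  intro m _
  rw [Polynomial.derivative_C_mul, Polynomial.derivative_X_pow, ← mul_assoc]
  congr 1
  rw [← Polynomial.C_mul]
  congr 1
  push_cast
  have : (2 * (m : ℚ) + 1) ≠ 0 := by positivity
  field_simp

theorem pp_zero (n : ℕ) : (pp n).eval 0 = 0 := by
  simp [pp, Polynomial.eval_finsetSum]

theorem pp_one (n : ℕ) : (pp n).eval 1 = cauchy2 n := by
  simp [pp, Polynomial.eval_finsetSum, cauchy2]

theorem T2_gt (n m : ℕ) (h : n < m) : T2 n m = 0 := by
  induction n generalizing m with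
  | zero =>
    cases m with
    | zero => omega
    | succ m => simp [T2]
  | succ n ih =>
    cases m with
    | zero => omega
    | succ m => simp [T2, ih m (by omega), ih (m+1) (by omega)]

theorem gp_zero : gp 0 = 1 := by simp [gp, T2]

theorem T2_zero_s3 (n : ℕ) : (n : ℚ) ^ 2 * T2 n 0 = 0 := by
  cases n <;> simp [T2]

theorem gp_succ (n : ℕ) :
    gp (n + 1) = (Polynomial.X ^ 2 - Polynomial.C (4 * (n : ℚ) ^ 2)) * gp n := by
  unfold gp
  rw [Finset.sum_range_succ']
  have e : ∀ m ∈ Finset.range (n + 1),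
      Polynomial.C ((-4 : ℚ) ^ (n + 1 - (m + 1)) * (T2 (n + 1) (m + 1) : ℚ)) * Polynomial.X ^ (2 * (m + 1))
      = Polynomial.X ^ 2 * (Polynomial.C ((-4 : ℚ) ^ (n - m) * (T2 n m : ℚ)) * Polynomial.X ^ (2 * m))
      + Polynomial.C ((-4 : ℚ) ^ (n - m) * ((n : ℚ) ^ 2 * T2 n (m + 1))) * Polynomial.X ^ (2 * (m + 1)) := by
    intro m _
    have : n + 1 - (m + 1) = n - m := by omega
    rw [this]
    simp only [T2]
    push_cast
    simp only [Polynomial.C_mul, Polynomial.C_add]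
    ring
  rw [Finset.sum_congr rfl e, Finset.sum_add_distrib, ← Finset.mul_sum, sub_mul, sub_eq_add_neg, add_assoc]
  congr 1
  simp only [T2, Nat.cast_zero, mul_zero, Polynomial.C_0, zero_mul, add_zero]
  rw [Finset.sum_range_succ, T2_gt n (n + 1) (by omega)]
  simp only [Nat.cast_zero, mul_zero, Polynomial.C_0, zero_mul, add_zero]
  rw [Finset.mul_sum, Finset.sum_range_succ']
  have z : Polynomial.C (4 * (n : ℚ) ^ 2) *
      (Polynomial.C ((-4 : ℚ) ^ (n - 0) * (T2 n 0 : ℚ)) * Polynomial.X ^ (2 * 0)) = 0 := by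
    rw [← mul_assoc, ← Polynomial.C_mul]
    have : 4 * (n : ℚ) ^ 2 * ((-4) ^ (n - 0) * (T2 n 0 : ℚ)) = 0 := by
      linear_combination 4 * (-4) ^ (n - 0) * T2_zero_s3 n
    rw [this]; simp
  rw [z, add_zero, ← Finset.sum_neg_distrib]
  apply Finset.sum_congr rfl
  intro m hm
  have hm' := Finset.mem_range.1 hm
  have : n - m = (n - (m + 1)) + 1 := by omega
  rw [this, ← mul_assoc (Polynomial.C (4 * (n : ℚ) ^ 2)), ← Polynomial.C_mul, ← neg_mul, ← Polynomial.C_neg]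
  congr 2
  rw [pow_succ]; ring

/-- Coefficientwise derivative. -/
noncomputable def dP (f : PowerSeries (Polynomial ℚ)) : PowerSeries (Polynomial ℚ) :=
  PowerSeries.mk fun n => Polynomial.derivative (PowerSeries.coeff n f)

theorem coeff_dP (f : PowerSeries (Polynomial ℚ)) (n : ℕ) :
    PowerSeries.coeff n (dP f) = Polynomial.derivative (PowerSeries.coeff n f) := by simp [dP]

theorem dP_add (f g : PowerSeries (Polynomial ℚ)) : dP (f + g) = dP f + dP g := by
  ext1 n; simp [coeff_dP]

theorem dP_sub (f g : PowerSeries (Polynomial ℚ)) : dP (f - g) = dP f - dP g := by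
  ext1 n; simp [coeff_dP]

theorem dP_mul (f g : PowerSeries (Polynomial ℚ)) : dP (f * g) = dP f * g + f * dP g := by
  ext1 n
  simp only [coeff_dP, map_add, PowerSeries.coeff_mul, map_sum, Polynomial.derivative_mul,
    Finset.sum_add_distrib]

theorem dP_th (f : PowerSeries (Polynomial ℚ)) : dP (thE f) = thE (dP f) := by
  ext1 n; simp [coeff_dP, coeff_thE, Polynomial.derivative_mul]

noncomputable def io : PowerSeries ℚ →+* PowerSeries (Polynomial ℚ) := PowerSeries.map Polynomial.C

theorem coeff_io (f : PowerSeries ℚ) (n : ℕ) :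
    PowerSeries.coeff n (io f) = Polynomial.C (PowerSeries.coeff n f) := by simp [io]

theorem dP_io (f : PowerSeries ℚ) : dP (io f) = 0 := by
  ext1 n; simp [coeff_dP, coeff_io]

theorem th_io (f : PowerSeries ℚ) : thE (io f) = io (thE f) := by
  ext1 n; simp [coeff_thE, coeff_io]

theorem io_X : io PowerSeries.X = PowerSeries.X := by simp [io]

theorem dP_X : dP PowerSeries.X = 0 := by rw [← io_X, dP_io]

theorem dP_two : dP 2 = 0 := by
  have : (2 : PowerSeries (Polynomial ℚ)) = io 2 := by rw [map_ofNat]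
  rw [this, dP_io]

noncomputable def xx : PowerSeries (Polynomial ℚ) := PowerSeries.C Polynomial.X

theorem dP_xx : dP xx = 1 := by
  ext1 n
  rw [coeff_dP, xx, PowerSeries.coeff_C, PowerSeries.coeff_one]
  split_ifs <;> simp

theorem th_xx : thE xx = 0 := thE_C _

noncomputable def GS : PowerSeries (Polynomial ℚ) :=
  PowerSeries.mk fun n => Polynomial.C (1 / ((2 * n).factorial : ℚ)) * gp n

noncomputable def PS : PowerSeries (Polynomial ℚ) :=
  PowerSeries.mk fun n => Polynomial.C (1 / ((2 * n).factorial : ℚ)) * pp n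

theorem dP_PS : dP PS = GS := by
  ext1 n; simp only [coeff_dP, PS, GS, PowerSeries.coeff_mk, Polynomial.derivative_C_mul, pp_der]

noncomputable def sS : PowerSeries (Polynomial ℚ) :=
  PowerSeries.mk fun n => Polynomial.C (1 / (2 * (n : ℚ) + 1)) * PowerSeries.coeff n (xx * (io qS * GS))

theorem two_C : (2 : PowerSeries (Polynomial ℚ)) = PowerSeries.C (Polynomial.C 2) := by
  rw [map_ofNat, map_ofNat]

theorem s_ode : 2 * thE sS + sS = xx * (io qS * GS) := by
  rw [two_C]
  ext1 n
  simp only [map_add, PowerSeries.coeff_C_mul, coeff_thE, sS, PowerSeries.coeff_mk]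
  have h : (2 * (n : ℚ) + 1) ≠ 0 := by positivity
  have h2 : (Polynomial.C 2 * (n : Polynomial ℚ) + 1) * Polynomial.C (1 / (2 * (n : ℚ) + 1)) = 1 := by
    have : (n : Polynomial ℚ) = Polynomial.C (n : ℚ) := by simp
    rw [this, ← Polynomial.C_1, ← Polynomial.C_mul, ← Polynomial.C_add, ← Polynomial.C_mul]
    congr 1
    field_simp
  linear_combination PowerSeries.coeff n (xx * (io qS * GS)) * h2

theorem fact_step (n : ℕ) : ((2 * (n + 1)).factorial : ℚ) = (2 * n + 2) * (2 * n + 1) * (2 * n).factorial := by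
  have : 2 * (n + 1) = 2 * n + 1 + 1 := by ring
  rw [this, Nat.factorial_succ, Nat.factorial_succ]; push_cast; ring

theorem G_ode : 4 * (1 + PowerSeries.X) * thE (thE GS) - 2 * thE GS = xx * xx * PowerSeries.X * GS := by
  have h : 4 * (1 + PowerSeries.X) * thE (thE GS) - 2 * thE GS =
    PowerSeries.C (Polynomial.C 4) * (thE (thE GS) + PowerSeries.X * thE (thE GS)) - PowerSeries.C (Polynomial.C 2) * thE GS := by
    rw [map_ofNat, map_ofNat, map_ofNat, map_ofNat]; ring
  have h' : xx * xx * PowerSeries.X * GS = PowerSeries.C (Polynomial.X ^ 2) * (PowerSeries.X * GS) := by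
    rw [map_pow]; unfold xx; ring
  rw [h, h']
  ext1 n
  cases n with
  | zero => simp [const_thE]
  | succ n =>
    simp only [PowerSeries.coeff_C_mul, map_add, map_sub, PowerSeries.coeff_succ_X_mul, coeff_thE, GS,
      PowerSeries.coeff_mk, gp_succ]
    have h2 : ((n + 1 : ℕ) : Polynomial ℚ) = Polynomial.C ((n : ℚ) + 1) := by simp
    have h3 : (n : Polynomial ℚ) = Polynomial.C (n : ℚ) := by simp
    rw [h2, h3]
    have h4 : Polynomial.C (1 / ((2 * n).factorial : ℚ)) =
       (Polynomial.C ((2 * (n : ℚ) + 2) * (2 * n + 1))) * Polynomial.C (1 / ((2 * (n + 1)).factorial : ℚ)) := by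
      rw [← Polynomial.C_mul]
      congr 1
      rw [fact_step]
      have : ((2 * n).factorial : ℚ) ≠ 0 := by positivity
      field_simp
    rw [h4]
    generalize Polynomial.C (1 / ((2 * (n + 1)).factorial : ℚ)) = u
    simp only [Polynomial.C_mul, Polynomial.C_add, Polynomial.C_pow, Polynomial.C_1,
      map_ofNat]
    ring

theorem io_rq : io rS * io qS = 1 := by rw [← map_mul, r_q, map_one]

theorem io_rr : io rS * io rS = 1 + PowerSeries.X := by
  rw [← map_mul, r_sq, map_add, map_one, io_X]

theorem io_r_ode : 2 * io rS * thE (io rS) = PowerSeries.X := by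
  have := congrArg io r_ode2
  rw [io_X, map_mul, map_mul, ← th_io, map_ofNat] at this
  exact this

theorem io_a_ode : 2 * thE (io aS) + io aS = io qS := by
  have := congrArg io a_ode
  rw [map_add, map_mul, ← th_io, map_ofNat] at this
  exact this

theorem G_fst : 2 * thE GS = io qS * (xx * PowerSeries.X * sS) := by
  set V := io rS * (2 * thE GS) with hV
  have hr : io rS ≠ 0 := left_ne_zero_of_mul_eq_one io_rq
  have h1 : 2 * thE V - V = xx * xx * PowerSeries.X * (io qS * GS) := by
    apply mul_left_cancel₀ hr
    rw [hV]
    simp only [thE_mul, thE_two]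
    linear_combination G_ode + 2 * thE GS * io_r_ode - xx * xx * PowerSeries.X * GS * io_rq + (4 * thE (thE GS) - 2 * thE GS) * io_rr
  have h2 : 2 * thE (V - xx * PowerSeries.X * sS) - (V - xx * PowerSeries.X * sS) = 0 := by
    simp only [thE_sub, thE_mul, th_xx, thE_X]
    linear_combination h1 - xx * PowerSeries.X * s_ode
  have h3 : V - xx * PowerSeries.X * sS = 0 := by
    generalize V - xx * PowerSeries.X * sS = Y at h2
    ext1 n
    have h4 := congrArg (PowerSeries.coeff n) h2
    rw [two_C] at h4
    rw [map_sub, PowerSeries.coeff_C_mul, coeff_thE] at h4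
    have h5 : Polynomial.C (2 * (n : ℚ) - 1) * PowerSeries.coeff n Y = 0 := by
      rw [map_zero] at h4
      rw [← h4]
      simp only [Polynomial.C_mul, Polynomial.C_sub, Polynomial.C_1, map_natCast]
      ring
    rcases mul_eq_zero.1 h5 with h | h
    · exfalso
      rw [Polynomial.C_eq_zero] at h
      have : (2 * (n : ℤ) - 1) = 0 := by exact_mod_cast h
      omega
    · rw [h]; simp
  linear_combination io qS * h3 - 2 * thE GS * io_rq + io qS * hV

theorem coeff_mul_zero {R : Type} [CommRing R] (f g : PowerSeries R) (n : ℕ)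
    (h : ∀ i ≤ n, PowerSeries.coeff i g = 0) : PowerSeries.coeff n (f * g) = 0 := by
  rw [PowerSeries.coeff_mul]
  apply Finset.sum_eq_zero
  rintro ⟨i, j⟩ hij
  rw [Finset.HasAntidiagonal.mem_antidiagonal] at hij
  simp only at hij ⊢
  rw [h j (by omega), mul_zero]

theorem uniq (W Z p : PowerSeries (Polynomial ℚ)) (h1 : 2 * thE W + W = p * Z)
    (h2 : 2 * thE Z = PowerSeries.X * (p * W)) (h0 : PowerSeries.coeff 0 Z = 0) : W = 0 := by
  rw [two_C] at h1 h2
  have key : ∀ n, (∀ i ≤ n, PowerSeries.coeff i Z = 0) ∧ (∀ i < n, PowerSeries.coeff i W = 0) := by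
    intro n
    induction n with
    | zero =>
      refine ⟨?_, fun i hi => by omega⟩
      intro i hi
      obtain rfl : i = 0 := by omega
      exact h0
    | succ n ih =>
      have hW : ∀ i < n + 1, PowerSeries.coeff i W = 0 := by
        intro i hi
        rcases Nat.lt_or_ge i n with h | h
        · exact ih.2 i h
        obtain rfl : i = n := by omega
        have h4 := congrArg (PowerSeries.coeff i) h1
        rw [coeff_mul_zero p Z i ih.1, map_add, PowerSeries.coeff_C_mul, coeff_thE] at h4
        have h5 : Polynomial.C (2 * (i : ℚ) + 1) * PowerSeries.coeff i W = 0 := by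
          rw [← h4]
          simp only [Polynomial.C_mul, Polynomial.C_add, Polynomial.C_1, map_natCast]
          ring
        rcases mul_eq_zero.1 h5 with h | h
        · exfalso
          rw [Polynomial.C_eq_zero] at h
          have : (2 * (i : ℚ) + 1) ≠ 0 := by positivity
          exact this h
        · exact h
      refine ⟨?_, hW⟩
      intro i hi
      rcases Nat.lt_or_ge i (n + 1) with h | h
      · exact ih.1 i (by omega)
      obtain rfl : i = n + 1 := by omega
      have h4 := congrArg (PowerSeries.coeff (n + 1)) h2
      rw [PowerSeries.coeff_succ_X_mul, coeff_mul_zero p W n (fun i hi => hW i (by omega)),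
        PowerSeries.coeff_C_mul, coeff_thE] at h4
      rcases mul_eq_zero.1 h4 with h | h
      · simp at h
      rcases mul_eq_zero.1 h with h | h
      · exfalso
        exact Nat.cast_ne_zero.2 (Nat.succ_ne_zero n) h
      · exact h
  ext1 n
  rw [(key (n + 1)).2 n (by omega), map_zero]

theorem ds_eq : dP sS = io aS * GS := by
  have d1 := congrArg dP s_ode
  have d2 := congrArg dP G_fst
  simp only [dP_add, dP_mul, dP_th, dP_io, dP_xx, dP_two, dP_X] at d1 d2
  have := uniq (dP sS - io aS * GS) (dP GS - PowerSeries.X * (io aS * sS)) (xx * io qS)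
    (by
      simp only [thE_sub, thE_mul]
      linear_combination d1 - GS * io_a_ode - io aS * G_fst)
    (by
      simp only [thE_sub, thE_mul, thE_X]
      linear_combination d2 - PowerSeries.X * sS * io_a_ode - PowerSeries.X * io aS * s_ode)
    (by
      rw [map_sub, PowerSeries.coeff_zero_X_mul, sub_zero, coeff_dP]
      simp [GS, gp_zero])
  exact sub_eq_zero.1 this

theorem s_eq : sS = io aS * PS := by
  have hd : dP (sS - io aS * PS) = 0 := by
    rw [dP_sub, dP_mul, dP_io, dP_PS, ds_eq]; ring
  rw [← sub_eq_zero]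
  ext1 n
  have h1 := congrArg (PowerSeries.coeff n) hd
  rw [coeff_dP, map_zero] at h1
  have h2 := Polynomial.derivative_eq_zero.1 h1
  obtain ⟨c, hc⟩ := Polynomial.natDegree_eq_zero.1 h2
  rw [← hc, map_zero]
  have h3 : (PowerSeries.coeff n (sS - io aS * PS)).eval 0 = 0 := by
    rw [map_sub, Polynomial.eval_sub, sS, PowerSeries.coeff_mk, xx, PowerSeries.coeff_C_mul,
      PowerSeries.coeff_mul, PowerSeries.coeff_mul]
    simp [PS, pp_zero, Polynomial.eval_finsetSum]
  rw [← hc, Polynomial.eval_C] at h3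
  rw [h3, map_zero]

noncomputable def ev1 : PowerSeries (Polynomial ℚ) →+* PowerSeries ℚ :=
  PowerSeries.map (Polynomial.evalRingHom 1)

theorem ev1_io (f : PowerSeries ℚ) : ev1 (io f) = f := by
  ext n; simp [ev1, io]

theorem ev1_th (f : PowerSeries (Polynomial ℚ)) : ev1 (thE f) = thE (ev1 f) := by
  ext n; simp [ev1, coeff_thE]

theorem ev1_G : ev1 GS = rS := by
  ext n
  simp only [ev1, PowerSeries.coeff_map, GS, PowerSeries.coeff_mk, rS, Polynomial.coe_evalRingHom]
  induction n with
  | zero => simp [gp_zero, bco]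
  | succ n ih =>
    rw [bco, ← ih, gp_succ, fact_step]
    simp only [Polynomial.eval_mul, Polynomial.eval_C, Polynomial.eval_sub, Polynomial.eval_pow,
      Polynomial.eval_X]
    have : ((2 * n).factorial : ℚ) ≠ 0 := by positivity
    have h : (2 * (n : ℚ) + 1) ≠ 0 := by positivity
    have h : (2 * (n : ℚ) + 2) ≠ 0 := by positivity
    field_simp
    ring

noncomputable def CS : PowerSeries ℚ :=
  PowerSeries.mk fun n => cauchy2 n / ((2 * n).factorial : ℚ)

theorem ev1_P : ev1 PS = CS := by
  ext n
  simp [ev1, PS, CS, pp_one]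
  ring

theorem ev1_s : ev1 sS = 1 := by
  have h := congrArg ev1 s_ode
  have hx : ev1 xx = 1 := by simp [ev1, xx]
  rw [map_add, map_mul, map_mul, map_mul, ev1_th, ev1_io, ev1_G, hx, mul_comm qS, r_q,
    map_ofNat] at h
  have h' : (2 : PowerSeries ℚ) = PowerSeries.C 2 := by rw [map_ofNat]
  rw [h'] at h
  ext n
  have h4 := congrArg (PowerSeries.coeff n) h
  rw [map_add, PowerSeries.coeff_C_mul, coeff_thE, one_mul] at h4
  rw [PowerSeries.coeff_one] at h4 ⊢
  have : (2 * (n : ℚ) + 1) ≠ 0 := by positivity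
  apply mul_left_cancel₀ this
  split_ifs at h4 ⊢ with hn
  · subst hn; simp at h4 ⊢; exact h4
  · linarith

theorem a_C : aS * CS = 1 := by
  rw [← ev1_s, s_eq, map_mul, ev1_io, ev1_P]

noncomputable def ES : PowerSeries ℚ := 2 * thE CS - CS

theorem C_sq : CS * CS = - (rS * ES) := by
  have h := congrArg thE a_C
  rw [thE_mul, thE_one] at h
  unfold ES
  linear_combination (2 * rS * CS) * h - (rS * CS * CS) * a_ode - (2 * rS * thE CS - rS * CS) * a_C - CS * CS * r_q

theorem main_id : 3 * (CS * thE ES) = - (3 * (thE (thE rS) * ES) + 3 * (thE rS * thE ES)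
    + 2 * (rS * thE (thE ES)) - 2 * (rS * thE ES) - 2 * (thE rS * ES)) := by
  have hE : 2 * thE CS = ES + CS := by unfold ES; ring
  have h1 : CS * ES = rS * ES - thE rS * ES - rS * thE ES := by
    have h := congrArg thE C_sq
    have : - (rS * ES) = 0 - rS * ES := by ring
    rw [this, thE_sub, thE_mul, thE_mul] at h
    have z : thE (0 : PowerSeries ℚ) = 0 := by unfold thE; simp
    rw [z] at h
    linear_combination h - CS * hE - C_sq
  have h2 := congrArg thE h1
  simp only [thE_sub, thE_mul] at h2
  have h4 : rS * thE (thE rS) + thE rS * thE rS = rS * thE rS := by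
    have h := congrArg thE r_ode2
    rw [thE_mul, thE_mul, thE_two, thE_X] at h
    have h2 : (2 : PowerSeries ℚ) ≠ 0 := by
      intro h0
      have h' : (2 : PowerSeries ℚ) = PowerSeries.C 2 := by rw [map_ofNat]
      have := congrArg (PowerSeries.coeff 0) h0
      rw [h'] at this
      simp at this
    apply mul_left_cancel₀ h2
    linear_combination h - r_ode2
  apply mul_left_cancel₀ r_ne
  linear_combination 2 * rS * h2 - rS * ES * hE - ES * C_sq + CS * h1 - thE rS * h1 + ES * h4

theorem ddf_b (k : ℕ) : (-1 : ℚ) ^ ((k : ℤ) - 2) * ddf ((k : ℤ) - 1) /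
    ((2 : ℚ) ^ ((k : ℤ) - 1) * (k.factorial : ℚ)) = -2 * bco k := by
  cases k with
  | zero =>
    simp [ddf, odFact, bco]
  | succ k =>
    have e1 : ((k + 1 : ℕ) : ℤ) - 1 = (k : ℤ) := by push_cast; ring
    have e2 : ((k + 1 : ℕ) : ℤ) - 2 = (k : ℤ) - 1 := by push_cast; ring
    rw [e1, e2, zpow_sub₀ (by norm_num), zpow_natCast, zpow_natCast]
    have : ddf (k : ℤ) = odFact k := by simp [ddf]
    rw [this]
    induction k with
    | zero => simp [odFact, bco]
    | succ k ih =>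
      rw [bco, mul_left_comm, ← ih (by push_cast; ring) (by push_cast; ring) (by simp [ddf])]
      rw [odFact, Nat.factorial_succ (k + 1)]
      have : ((k + 1).factorial : ℚ) ≠ 0 := by positivity
      push_cast
      have : ((k : ℚ) + 1 + 1) ≠ 0 := by positivity
      have : (2 * ((k : ℚ) + 1) + 2) ≠ 0 := by positivity
      field_simp
      ring

theorem lhs_coeff (n : ℕ) : ∑ i ∈ Finset.range (n + 1),
        (Nat.choose (2 * n) (2 * i) : ℚ) * cauchy2 i * cauchy2 (n - i + 1) =
    ((2 * n).factorial : ℚ) * (2 * PowerSeries.coeff (n + 1) (CS * thE ES)) := by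
  have hE : 2 * thE ES = PowerSeries.X *
      PowerSeries.mk (fun n => cauchy2 (n + 1) / ((2 * n).factorial : ℚ)) := by
    have h' : (2 : PowerSeries ℚ) = PowerSeries.C 2 := by rw [map_ofNat]
    unfold ES
    rw [h']
    ext m
    cases m with
    | zero => simp [const_thE]
    | succ m =>
      simp only [PowerSeries.coeff_C_mul, PowerSeries.coeff_succ_X_mul, coeff_thE, map_sub, CS,
        PowerSeries.coeff_mk]
      rw [fact_step]
      have : ((2 * m).factorial : ℚ) ≠ 0 := by positivity
      push_cast
      field_simp
      ring
  have h2 : 2 * PowerSeries.coeff (n + 1) (CS * thE ES) = PowerSeries.coeff (n + 1) (CS * (2 * thE ES)) := by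
    have h' : (2 : PowerSeries ℚ) = PowerSeries.C 2 := by rw [map_ofNat]
    rw [h', mul_left_comm, PowerSeries.coeff_C_mul]
  rw [h2, hE, mul_left_comm, PowerSeries.coeff_succ_X_mul, PowerSeries.coeff_mul,
    Finset.Nat.sum_antidiagonal_eq_sum_range_succ_mk, Finset.mul_sum]
  apply Finset.sum_congr rfl
  intro i hi
  have hi' := Finset.mem_range.1 hi
  simp only [CS, PowerSeries.coeff_mk]
  rw [Nat.cast_choose ℚ (by omega : 2 * i ≤ 2 * n)]
  have : 2 * n - 2 * i = 2 * (n - i) := by omega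
  rw [this]
  ring

theorem rhs_coeff (n : ℕ) : PowerSeries.coeff (n + 1) (3 * (CS * thE ES)) =
   - ∑ l ∈ Finset.range (n + 2), (2 * (l : ℚ) - 1) *
          (3 * (n : ℚ) ^ 2 - 3 * (n : ℚ) * (l : ℚ) + 2 * (l : ℚ) ^ 2 +
            4 * (n : ℚ) - 3 * (l : ℚ) + 1) * bco (n + 1 - l) * (cauchy2 l / ((2 * l).factorial : ℚ)) := by
  rw [main_id]
  have h' : (2 : PowerSeries ℚ) = PowerSeries.C 2 := by rw [map_ofNat]
  have h3 : (3 : PowerSeries ℚ) = PowerSeries.C 3 := by rw [map_ofNat]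
  rw [map_neg]
  congr 1
  rw [h', h3]
  simp only [map_add, map_sub, PowerSeries.coeff_C_mul]
  simp only [PowerSeries.coeff_mul, Finset.mul_sum]
  simp only [← Finset.sum_add_distrib, ← Finset.sum_sub_distrib]
  rw [← Finset.Nat.sum_antidiagonal_swap]
  simp only [Prod.fst_swap, Prod.snd_swap]
  rw [Finset.Nat.sum_antidiagonal_eq_sum_range_succ_mk]
  apply Finset.sum_congr rfl
  intro l hl
  have hl' := Finset.mem_range.1 hl
  unfold ES
  rw [h']
  simp only [coeff_thE, map_sub, PowerSeries.coeff_C_mul, CS, rS, PowerSeries.coeff_mk]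
  rw [Nat.cast_sub (by omega)]
  push_cast
  ring

theorem statement3 (n : ℕ) :
    ∑ i ∈ Finset.range (n + 1),
        (Nat.choose (2 * n) (2 * i) : ℚ) * cauchy2 i * cauchy2 (n - i + 1) =
    (Nat.factorial (2 * n) : ℚ) * ∑ l ∈ Finset.range (n + 2),
        (-1 : ℚ) ^ ((n : ℤ) - l - 1) * (2 * (l : ℚ) - 1) *
          (3 * (n : ℚ) ^ 2 - 3 * (n : ℚ) * (l : ℚ) + 2 * (l : ℚ) ^ 2 +
            4 * (n : ℚ) - 3 * (l : ℚ) + 1) * ddf ((n : ℤ) - l) /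
          (3 * (2 : ℚ) ^ ((n : ℤ) - l) * (Nat.factorial (n + 1 - l) : ℚ) *
            (Nat.factorial (2 * l) : ℚ)) * cauchy2 l := by
  rw [lhs_coeff]
  congr 1
  have h := rhs_coeff n
  have h3 : (3 : PowerSeries ℚ) = PowerSeries.C 3 := by rw [map_ofNat]
  rw [h3, PowerSeries.coeff_C_mul] at h
  have h4 : 2 * PowerSeries.coeff (n + 1) (CS * thE ES) =
      (2 / 3) * (3 * PowerSeries.coeff (n + 1) (CS * thE ES)) := by ring
  rw [h4, h, ← Finset.sum_neg_distrib, Finset.mul_sum]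
  apply Finset.sum_congr rfl
  intro l hl
  have hl' := Finset.mem_range.1 hl
  have hb := ddf_b (n + 1 - l)
  have e : ((n + 1 - l : ℕ) : ℤ) = (n : ℤ) - l + 1 := by omega
  rw [e] at hb
  have e1 : (n : ℤ) - l + 1 - 2 = (n : ℤ) - l - 1 := by ring
  have e2 : (n : ℤ) - l + 1 - 1 = (n : ℤ) - l := by ring
  rw [e1, e2] at hb
  have hb' : bco (n + 1 - l) = -(1 / 2) * (-2 * bco (n + 1 - l)) := by ring
  rw [hb', ← hb]
  have : ((n + 1 - l).factorial : ℚ) ≠ 0 := by positivity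
  have : ((2 * l).factorial : ℚ) ≠ 0 := by positivity
  have : (2 : ℚ) ^ ((n : ℤ) - l) ≠ 0 := by positivity
  field_simp
end

section
/- For every integer n ≥ 1, the four-fold convolution ∑_{i₁+i₂+i₃+i₄=n, iⱼ≥0} (2n)!/((2i₁)!(2i₂)!(2i₃)!(2i₄)!) · 𝔠_{2i₁} 𝔠_{2i₂} 𝔠_{2i₃} 𝔠_{2i₄} = (2n)!/6 · ∑_{l=0}^{n} (-1)^{n-l}(2n-2l-3)!!(2l-1)(2l-2)(2l-3)/(2^{n-l}(n-l)!(2l)!) · 𝔠_{2l} + (2n)!/6 · ∑_{l=1}^{n} (-1)^{n-l}(2n-2l-3)!!(2l)(2l-1)(2l-3)³/(2^{n-l}(n-l)!(2l)!) · 𝔠_{2l-2}. -/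
open PowerSeries

namespace Cau

noncomputable def th (f : ℚ⟦X⟧) : ℚ⟦X⟧ := 2 * (X * d⁄dX ℚ f)

lemma coeff_th (n : ℕ) (f : ℚ⟦X⟧) : coeff n (th f) = 2 * n * coeff n f := by
  have h2 : (2 : ℚ⟦X⟧) = C (2 : ℚ) := (map_ofNat C 2).symm
  rw [th, h2, coeff_C_mul]
  cases n with
  | zero => simp
  | succ n => rw [coeff_succ_X_mul, coeff_derivative]; push_cast; ring

lemma th_mul (f g : ℚ⟦X⟧) : th (f * g) = th f * g + f * th g := by
  simp only [th, Derivation.leibniz, smul_eq_mul]; ring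

lemma th_add (f g : ℚ⟦X⟧) : th (f + g) = th f + th g := by
  simp only [th, map_add]; ring

lemma th_sub (f g : ℚ⟦X⟧) : th (f - g) = th f - th g := by
  simp only [th, map_sub]; ring

lemma th_neg (f : ℚ⟦X⟧) : th (-f) = - th f := by
  simp only [th, map_neg]; ring

lemma th_X : th (X : ℚ⟦X⟧) = 2 * X := by
  simp [th]

lemma th_nat (m : ℕ) : th (m : ℚ⟦X⟧) = 0 := by
  simp [th]

lemma th_one : th (1 : ℚ⟦X⟧) = 0 := by
  simpa using th_nat 1

lemma th_two : th (2 : ℚ⟦X⟧) = 0 := by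
  simpa using th_nat 2

def sc : ℕ → ℚ
  | 0 => 1
  | n + 1 => sc n * (1 - 2 * n) / (2 * n + 2)

lemma sc_succ (n : ℕ) : sc (n + 1) * (2 * n + 2) = sc n * (1 - 2 * n) := by
  have : (2 * n + 2 : ℚ) ≠ 0 := by positivity
  rw [sc]; field_simp

noncomputable def s : ℚ⟦X⟧ := mk sc
noncomputable def u : ℚ⟦X⟧ := s⁻¹
noncomputable def A : ℚ⟦X⟧ := mk fun n => coeff n u / (2 * n + 1)

lemma su : s * u = 1 := PowerSeries.mul_inv_cancel _ (by simp [s, ← coeff_zero_eq_constantCoeff_apply, sc])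

lemma s_ne : s ≠ 0 := left_ne_zero_of_mul_eq_one su

lemma th_s0 : th s + X * th s = X * s := by
  ext n
  rw [map_add]
  cases n with
  | zero => simp [coeff_th]
  | succ n =>
    rw [coeff_succ_X_mul, coeff_succ_X_mul, coeff_th, coeff_th]
    simp only [s, coeff_mk]
    have := sc_succ n
    push_cast
    linarith

lemma ss : s * s = 1 + X := by
  have h : th (s * s) + X * th (s * s) = 2 * (X * (s * s)) := by
    rw [th_mul]; linear_combination (2 * s) * th_s0
  have h2 : (2 : ℚ⟦X⟧) = C (2 : ℚ) := (map_ofNat C 2).symm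
  have key : ∀ n : ℕ, coeff (n + 1) (s * s) * (2 * n + 2) = (2 - 2 * n) * coeff n (s * s) := by
    intro n
    have := congrArg (coeff (n + 1)) h
    rw [map_add, h2, coeff_C_mul, coeff_succ_X_mul, coeff_succ_X_mul, coeff_th, coeff_th] at this
    push_cast at this
    linarith
  have k0 : coeff 0 (s * s) = 1 := by simp [s, sc]
  have k1 : coeff 1 (s * s) = 1 := by
    have := key 0
    rw [k0] at this
    norm_num at this
    linarith
  have k2 : ∀ n, coeff (n + 2) (s * s) = 0 := by
    intro n
    induction n with
    | zero =>
      have := key 1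
      norm_num at this
      simpa using this
    | succ n ih =>
      have := key (n + 2)
      rw [ih, mul_zero] at this
      have h3 : (2 * ((n + 2 : ℕ) : ℚ) + 2) ≠ 0 := by positivity
      exact (mul_eq_zero.mp this).resolve_right h3
  ext n
  match n with
  | 0 => rw [k0]; simp
  | 1 => rw [k1]; simp [coeff_one]
  | n + 2 => rw [k2]; simp [coeff_one, coeff_X]

lemma th_s : th s = X * u := by
  have : s * (s * th s) = s * X := by linear_combination th_s0 + th s * ss
  have := mul_left_cancel₀ s_ne this
  linear_combination u * this - th s * su

lemma th_u : th u = - X * u * u * u := by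
  have h : th (s * u) = 0 := by rw [su, th_one]
  rw [th_mul, th_s] at h
  linear_combination u * h - th u * su

lemma th_A : th A = u - A := by
  ext n
  rw [map_sub, coeff_th, A, coeff_mk]
  have : (2 * n + 1 : ℚ) ≠ 0 := by positivity
  field_simp
  ring

lemma T2_zero : ∀ n m : ℕ, n < m → T2 n m = 0 := by
  intro n
  induction n with
  | zero => intro m hm; cases m with
    | zero => omega
    | succ m => rfl
  | succ n ih => intro m hm; cases m with
    | zero => omega
    | succ m => rw [T2, ih m (by omega), ih (m + 1) (by omega), mul_zero, add_zero]

def P (n m : ℕ) : ℚ := (-4 : ℚ) ^ (n - m) * (T2 n m : ℚ)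

lemma P_zero (n m : ℕ) (h : n < m) : P n m = 0 := by simp [P, T2_zero n m h]

lemma P_succ_zero (n : ℕ) : P (n + 1) 0 = 0 := by simp [P, T2]

lemma P_succ (n m : ℕ) : P (n + 1) (m + 1) = P n m - 4 * n ^ 2 * P n (m + 1) := by
  simp only [P, T2]
  rw [Nat.add_sub_add_right]
  rcases Nat.lt_or_ge n (m + 1) with h | h
  · rw [T2_zero n (m + 1) h]; push_cast; ring
  · obtain ⟨k, rfl⟩ := Nat.exists_eq_add_of_le h
    have e1 : m + 1 + k - m = k + 1 := by omega
    have e2 : m + 1 + k - (m + 1) = k := by omega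
    rw [e1, e2]; push_cast; ring

lemma sum_P (n : ℕ) : ∀ M, n < M → ∑ m ∈ Finset.range M, P n m = sc n * (Nat.factorial (2 * n) : ℚ) := by
  induction n with
  | zero =>
    intro M hM
    obtain ⟨M, rfl⟩ := Nat.exists_eq_succ_of_ne_zero (by omega : M ≠ 0)
    rw [Finset.sum_range_succ', Finset.sum_eq_zero]
    · simp [P, T2, sc]
    · intro i _; exact P_zero _ _ (by omega)
  | succ n ih =>
    intro M hM
    obtain ⟨M, rfl⟩ := Nat.exists_eq_succ_of_ne_zero (by omega : M ≠ 0)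
    have h1 := ih M (by omega)
    have h2 := ih (M + 1) (by omega)
    rw [Finset.sum_range_succ'] at h2
    have h3 : (n : ℚ) ^ 2 * P n 0 = 0 := by
      cases n with
      | zero => simp
      | succ n => rw [P_succ_zero, mul_zero]
    rw [Finset.sum_range_succ', P_succ_zero]
    simp only [P_succ]
    rw [Finset.sum_sub_distrib, ← Finset.mul_sum, h1, eq_sub_of_add_eq h2]
    have h4 : 2 * (n + 1) = (2 * n + 1) + 1 := by ring
    rw [h4, Nat.factorial_succ, Nat.factorial_succ]
    have h5 := sc_succ n
    push_cast
    linear_combination 4 * h3 - (Nat.factorial (2 * n) : ℚ) * (2 * n + 1) * h5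

noncomputable def F (m : ℕ) : ℚ⟦X⟧ := mk fun n => P n m / (Nat.factorial (2 * n) : ℚ)

lemma F_zero : F 0 = 1 := by
  ext n
  cases n with
  | zero => simp [F, P, T2]
  | succ n => simp [F, P_succ_zero, coeff_one]

lemma F_ode (m : ℕ) : th (th (F (m + 1))) - th (F (m + 1)) = X * F m - X * th (th (F (m + 1))) := by
  ext n
  rw [map_sub, map_sub]
  cases n with
  | zero => simp [coeff_th]
  | succ n =>
    rw [coeff_succ_X_mul, coeff_succ_X_mul]
    simp only [coeff_th, F, coeff_mk, P_succ]
    have h4 : 2 * (n + 1) = (2 * n + 1) + 1 := by ring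
    rw [h4, Nat.factorial_succ, Nat.factorial_succ]
    have : (Nat.factorial (2 * n) : ℚ) ≠ 0 := by positivity
    push_cast
    field_simp
    ring

lemma th1_inj (f : ℚ⟦X⟧) (h : th f = f) : f = 0 := by
  ext n
  have := congrArg (coeff n) h
  rw [coeff_th] at this
  have h1 : (2 * n - 1 : ℚ) ≠ 0 := by
    intro h
    have : (2 * n : ℚ) = 1 := by linarith
    have : 2 * n = 1 := by exact_mod_cast this
    omega
  have : (2 * n - 1 : ℚ) * coeff n f = 0 := by linarith
  simpa [h1] using this

lemma th_inj (f : ℚ⟦X⟧) (h : th f = 0) (h0 : coeff 0 f = 0) : f = 0 := by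
  ext n
  cases n with
  | zero => simpa using h0
  | succ n =>
    have := congrArg (coeff (n + 1)) h
    rw [coeff_th] at this
    have h1 : (2 * ((n + 1 : ℕ) : ℚ)) ≠ 0 := by positivity
    exact (mul_eq_zero.mp (this.trans (map_zero _))).resolve_left h1

lemma H1_of_K (m : ℕ) (K : A * s * th (F m) = 2 * m * F m) :
    (2 * (m : ℚ⟦X⟧) + 1) * (s * th (F (m + 1))) = X * A * F m := by
  rw [← sub_eq_zero]
  apply th1_inj
  apply mul_left_cancel₀ s_ne
  simp only [th_sub, th_add, th_mul, th_two, th_nat, th_one, th_X, th_s, th_A]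
  linear_combination ((2 * m + 1) * X * th (F (m + 1)) - X * F m) * su +
    (2 * m + 1) * (th (th (F (m + 1))) - th (F (m + 1))) * ss + (2 * m + 1) * F_ode m - X * K

lemma H2_of_K (m : ℕ) (K : A * s * th (F m) = 2 * m * F m) :
    (2 * (m : ℚ⟦X⟧) + 1) * (2 * (m : ℚ⟦X⟧) + 2) * F (m + 1) = X * A * A * F m := by
  have H1 := H1_of_K m K
  rw [← sub_eq_zero]
  apply th_inj
  · apply mul_left_cancel₀ s_ne
    simp only [th_sub, th_add, th_mul, th_two, th_nat, th_one, th_X, th_A]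
    linear_combination (2 * m + 2) * H1 - X * A * K - 2 * X * A * F m * su
  · have : coeff 0 (F (m + 1)) = 0 := by
      simp [F, P, T2]
    simp at this
    simp [this]

lemma K (m : ℕ) : A * s * th (F m) = 2 * m * F m := by
  induction m with
  | zero => simp [F_zero, th_one]
  | succ m ih =>
    have h1 := H1_of_K m ih
    have h2 := H2_of_K m ih
    have h0 : (2 * m + 1 : ℚ⟦X⟧) ≠ 0 := by
      intro h
      have h := congrArg constantCoeff h
      simp only [map_add, map_mul, map_one, map_natCast, map_ofNat, map_zero] at h
      have : (2 * m + 1 : ℚ) ≠ 0 := by positivity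
      exact this h
    apply mul_left_cancel₀ h0
    push_cast
    linear_combination A * h1 - h2

noncomputable def E : ℚ⟦X⟧ := mk fun n => cauchy2 n / (Nat.factorial (2 * n) : ℚ)

lemma coeff_mul_congr (N : ℕ) (a f g : ℚ⟦X⟧) (h : ∀ i ≤ N, coeff i f = coeff i g) :
    coeff N (a * f) = coeff N (a * g) := by
  rw [coeff_mul, coeff_mul]
  apply Finset.sum_congr rfl
  intro p hp
  rw [h p.2 (by have := Finset.HasAntidiagonal.mem_antidiagonal.mp hp; omega)]

lemma H1' (m : ℕ) : s * th (F (m + 1)) = X * A * (C (1 / (2 * m + 1 : ℚ)) * F m) := by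
  have h := H1_of_K m (K m)
  have e : (C (1 / (2 * m + 1 : ℚ))) * (2 * m + 1 : ℚ⟦X⟧) = 1 := by
    have : (2 * m + 1 : ℚ⟦X⟧) = C (2 * m + 1 : ℚ) := by
      rw [map_add, map_mul, map_one, map_natCast, map_ofNat]
    rw [this, ← map_mul, one_div_mul_cancel (by positivity), map_one]
  linear_combination C (1 / (2 * m + 1 : ℚ)) * h - s * th (F (m + 1)) * e

lemma XAE : X * A * E = X := by
  have : s * th s = X := by rw [th_s]; linear_combination X * su
  refine Eq.trans ?_ this
  ext N
  have hs := Finset.sum_congr (s₁ := Finset.range (N + 1)) rfl (fun m _ => H1' m)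
  rw [← Finset.mul_sum, ← Finset.mul_sum] at hs
  have hN := congrArg (coeff N) hs
  rw [coeff_mul_congr N s _ (th s), coeff_mul_congr N (X * A) _ E] at hN
  · exact hN.symm
  · intro i hi
    rw [map_sum]
    simp only [coeff_C_mul, F, E, coeff_mk, cauchy2]
    rw [Finset.sum_div]
    symm
    apply Finset.sum_subset_zero_on_sdiff
    · intro x hx; simp at hx ⊢; omega
    · intro x hx
      simp at hx
      rw [P_zero i x (by omega)]; simp
    · intro x hx
      simp only [P]
      ring
  · intro i hi
    have : ∑ m ∈ Finset.range (N + 1), th (F (m + 1)) = ∑ m ∈ Finset.range (N + 2), th (F m) := by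
      rw [Finset.sum_range_succ' _ (N + 1), F_zero, th_one, add_zero]
    rw [this, map_sum]
    simp only [coeff_th, F, coeff_mk]
    rw [← Finset.mul_sum, ← Finset.sum_div, sum_P i _ (by omega), s, coeff_mk]
    have : (Nat.factorial (2 * i) : ℚ) ≠ 0 := by positivity
    field_simp

lemma AE : A * E = 1 := by
  apply mul_left_cancel₀ (X_ne_zero (R := ℚ))
  linear_combination XAE

lemma th_E : th E = E - u * E * E := by
  have h : th (A * E) = 0 := by rw [AE, th_one]
  rw [th_mul, th_A] at h
  linear_combination E * h - th E * AE + E * AE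

noncomputable def D (c : ℕ) (f : ℚ⟦X⟧) : ℚ⟦X⟧ := th f - c * f

noncomputable def G1 : ℚ⟦X⟧ := D 3 (D 2 (D 1 E))
noncomputable def G2 : ℚ⟦X⟧ := D 1 (D 1 (D 1 E))

lemma coeff_D (c n : ℕ) (f : ℚ⟦X⟧) : coeff n (D c f) = (2 * n - c) * coeff n f := by
  have : (c : ℚ⟦X⟧) = C (c : ℚ) := by simp
  rw [D, map_sub, coeff_th, this, coeff_C_mul]; ring

lemma coeff_G1 (n : ℕ) : coeff n G1 = (2 * n - 1) * (2 * n - 2) * (2 * n - 3) * coeff n E := by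
  simp only [G1, coeff_D]; push_cast; ring

lemma coeff_G2 (n : ℕ) : coeff n G2 = (2 * n - 1) ^ 3 * coeff n E := by
  simp only [G2, coeff_D]; push_cast; ring

lemma main : 6 * E ^ 4 = - s * (G1 + X * G2) := by
  have d1 : D 1 E = - (u * (E * E)) := by
    rw [D, th_E]; push_cast; ring
  have hx : (X : ℚ⟦X⟧) = s * s - 1 := by rw [ss]; ring
  simp only [G1, G2, d1]
  simp only [D, th_sub, th_add, th_neg, th_mul, th_two, th_nat, th_X, th_u, th_E]
  push_cast
  have h := su
  rw [hx]
  generalize E = e at *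
  generalize u = v at *
  generalize s = w at *
  grind

lemma tuple_sum (e : ℕ → ℚ) (k : ℕ) : ∀ n, ∑ x ∈ Finset.Nat.antidiagonalTuple k n, ∏ j, e (x j)
    = coeff n ((mk e) ^ k) := by
  induction k with
  | zero =>
    intro n
    cases n with
    | zero => simp
    | succ n => simp [coeff_one]
  | succ k ih =>
    intro n
    rw [pow_succ', coeff_mul]
    simp only [← ih, coeff_mk, Finset.mul_sum]
    rw [Finset.sum_sigma']
    refine Finset.sum_nbij' (fun x => ⟨(x 0, ∑ j, Fin.tail x j), Fin.tail x⟩)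
      (fun y => Fin.cons y.1.1 y.2) ?_ ?_ ?_ ?_ ?_
    · intro x hx
      rw [Finset.Nat.mem_antidiagonalTuple, Fin.sum_univ_succ] at hx
      simp [Finset.Nat.mem_antidiagonalTuple, Fin.tail, hx]
    · rintro ⟨⟨a, b⟩, y⟩ hy
      simp [Finset.Nat.mem_antidiagonalTuple, Fin.sum_univ_succ] at hy ⊢
      omega
    · intro x hx
      simp
    · rintro ⟨⟨a, b⟩, y⟩ hy
      simp [Finset.Nat.mem_antidiagonalTuple] at hy ⊢
      simp [hy.2]
    · intro x hx
      simp [Fin.prod_univ_succ, Fin.tail]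

lemma ddf_sc (k : ℕ) : (-1 : ℚ) ^ k * ddf ((k : ℤ) - 1) / ((2 : ℚ) ^ k * (Nat.factorial k : ℚ)) = - sc k := by
  induction k with
  | zero => simp [ddf, odFact, sc]
  | succ k ih =>
    have hs := sc_succ k
    have h2 : (2 * k + 2 : ℚ) ≠ 0 := by positivity
    have hd : ddf (((k + 1 : ℕ) : ℤ) - 1) = (2 * k - 1) * ddf ((k : ℤ) - 1) := by
      cases k with
      | zero => simp [ddf, odFact]
      | succ k => simp [ddf, odFact]; rw [if_pos (by omega)]; ring_nf
    rw [hd, Nat.factorial_succ]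
    apply mul_right_cancel₀ h2
    have : sc (k+1) * (2 * k + 2) = ((-1 : ℚ) ^ k * ddf ((k : ℤ) - 1) / ((2 : ℚ) ^ k * (Nat.factorial k : ℚ))) * (2 * k - 1) := by
      rw [ih, hs]; ring
    rw [neg_mul, this]
    push_cast
    field_simp
    ring

end Cau

theorem statement6 (n : ℕ) (hn : 1 ≤ n) :
    ∑ x ∈ Finset.Nat.antidiagonalTuple 4 n,
        (Nat.multinomial Finset.univ (fun j => 2 * x j) : ℚ) * ∏ j, cauchy2 (x j) =
    (Nat.factorial (2 * n) : ℚ) / 6 * ∑ l ∈ Finset.range (n + 1),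
        (-1 : ℚ) ^ (n - l) * ddf ((n : ℤ) - l - 1) *
          (2 * (l : ℚ) - 1) * (2 * (l : ℚ) - 2) * (2 * (l : ℚ) - 3) /
          ((2 : ℚ) ^ (n - l) * (Nat.factorial (n - l) : ℚ) * (Nat.factorial (2 * l) : ℚ)) *
          cauchy2 l
    + (Nat.factorial (2 * n) : ℚ) / 6 * ∑ l ∈ Finset.Icc 1 n,
        (-1 : ℚ) ^ (n - l) * ddf ((n : ℤ) - l - 1) *
          (2 * (l : ℚ)) * (2 * (l : ℚ) - 1) * (2 * (l : ℚ) - 3) ^ 3 /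
          ((2 : ℚ) ^ (n - l) * (Nat.factorial (n - l) : ℚ) * (Nat.factorial (2 * l) : ℚ)) *
          cauchy2 (l - 1) := by
  have hL : ∑ x ∈ Finset.Nat.antidiagonalTuple 4 n,
        (Nat.multinomial Finset.univ (fun j => 2 * x j) : ℚ) * ∏ j, cauchy2 (x j) =
      (Nat.factorial (2 * n) : ℚ) * PowerSeries.coeff n (Cau.E ^ 4) := by
    rw [Cau.E, ← Cau.tuple_sum, Finset.mul_sum]
    apply Finset.sum_congr rfl
    intro x hx
    rw [Finset.Nat.mem_antidiagonalTuple] at hx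
    have h := Nat.multinomial_spec Finset.univ (fun j => 2 * x j)
    rw [← Finset.mul_sum, hx] at h
    rw [← h, Finset.prod_div_distrib]
    have : (∏ j, (Nat.factorial (2 * x j) : ℚ)) ≠ 0 :=
      Finset.prod_ne_zero_iff.mpr (fun j _ => by positivity)
    push_cast
    field_simp
  have h1 : ∑ l ∈ Finset.range (n + 1),
        (-1 : ℚ) ^ (n - l) * ddf ((n : ℤ) - l - 1) *
          (2 * (l : ℚ) - 1) * (2 * (l : ℚ) - 2) * (2 * (l : ℚ) - 3) /
          ((2 : ℚ) ^ (n - l) * (Nat.factorial (n - l) : ℚ) * (Nat.factorial (2 * l) : ℚ)) *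
          cauchy2 l = - PowerSeries.coeff n (Cau.s * Cau.G1) := by
    rw [mul_comm, PowerSeries.coeff_mul, Finset.Nat.sum_antidiagonal_eq_sum_range_succ_mk,
      ← Finset.sum_neg_distrib]
    apply Finset.sum_congr rfl
    intro l hl
    have hl' : l ≤ n := by simp at hl; omega
    have hd := Cau.ddf_sc (n - l)
    rw [Nat.cast_sub hl'] at hd
    rw [Cau.coeff_G1, Cau.s, PowerSeries.coeff_mk, Cau.E, PowerSeries.coeff_mk, ← mul_neg, ← hd]
    field_simp
  have h2 : ∑ l ∈ Finset.Icc 1 n,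
        (-1 : ℚ) ^ (n - l) * ddf ((n : ℤ) - l - 1) *
          (2 * (l : ℚ)) * (2 * (l : ℚ) - 1) * (2 * (l : ℚ) - 3) ^ 3 /
          ((2 : ℚ) ^ (n - l) * (Nat.factorial (n - l) : ℚ) * (Nat.factorial (2 * l) : ℚ)) *
          cauchy2 (l - 1) = - PowerSeries.coeff n (Cau.s * (PowerSeries.X * Cau.G2)) := by
    rw [mul_comm Cau.s, PowerSeries.coeff_mul, Finset.Nat.sum_antidiagonal_eq_sum_range_succ_mk,
      ← Finset.sum_neg_distrib, Finset.range_eq_Ico, Finset.sum_eq_sum_Ico_succ_bot (by omega)]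
    simp only [PowerSeries.coeff_zero_X_mul, zero_mul, neg_zero, zero_add]
    apply Finset.sum_congr (by ext; simp)
    intro l hl
    obtain ⟨l, rfl⟩ : ∃ k, l = k + 1 := ⟨l - 1, by simp at hl; omega⟩
    have hl' : l + 1 ≤ n := by simp at hl; omega
    have hd := Cau.ddf_sc (n - (l + 1))
    rw [Nat.cast_sub hl'] at hd
    rw [PowerSeries.coeff_succ_X_mul, Cau.coeff_G2, Cau.s, PowerSeries.coeff_mk, Cau.E,
      PowerSeries.coeff_mk, ← mul_neg, ← hd, Nat.add_sub_cancel]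
    have h4 : 2 * (l + 1) = (2 * l + 1) + 1 := by ring
    rw [h4, Nat.factorial_succ, Nat.factorial_succ]
    push_cast
    field_simp
    ring
  rw [hL, h1, h2]
  have hM := congrArg (PowerSeries.coeff n) Cau.main
  have h6 : (6 : PowerSeries ℚ) = PowerSeries.C (6 : ℚ) := (map_ofNat PowerSeries.C 6).symm
  rw [h6, PowerSeries.coeff_C_mul, neg_mul, mul_add, map_neg, map_add] at hM
  linear_combination (Nat.factorial (2 * n) : ℚ) / 6 * hM
end
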